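/- Let E be a finite extension of ℚ_ℓ (ℓ any prime, possibly ℓ = p), let E_∞/E be a ℤ_p-extension with layers E_n and Γ_n = Gal(E_∞/E_n). Let L_n denote the p-completion of E_n^× and L_∞ = lim← L_n the inverse limit under norm maps. Then for each n there is an exact sequence 0 → (L_∞)_{Γ_n} → L_n → Gal(E_∞/E_n) → 0, where the second map is the local Artin reciprocity map. -/

import Mathlib

open scoped Classical

/-- The subgroup `G^{p^m}` of a commutative group. -/
def pModRange (p : ℕ) (G : Type*) [CommGroup G] (m : ℕ) : Subgroup G :=
  (powMonoidHom (p ^ m) : G →* G).range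

lemma pModRange_le_comap {p : ℕ} {G H : Type*} [CommGroup G] [CommGroup H]
    (φ : G →* H) (m : ℕ) : pModRange p G m ≤ (pModRange p H m).comap φ := by
  rintro x ⟨y, rfl⟩
  exact ⟨φ y, by simp [powMonoidHom]⟩

lemma pModRange_succ_le (p : ℕ) (G : Type*) [CommGroup G] (m : ℕ) :
    pModRange p G (m + 1) ≤ (pModRange p G m).comap (MonoidHom.id G) := by
  rintro x ⟨y, rfl⟩
  refine ⟨y ^ p, ?_⟩
  simp only [powMonoidHom_apply, MonoidHom.id_apply, ← pow_mul]
  rw [← pow_succ']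

/-- The projective system `m ↦ G/G^{p^m}` whose inverse limit is the `p`-completion. -/
abbrev pTower (p : ℕ) (G : Type*) [CommGroup G] := ∀ m : ℕ, G ⧸ pModRange p G m

/-- Functoriality of the projective system of `p`-power quotients. -/
def pTowerMap (p : ℕ) {G H : Type*} [CommGroup G] [CommGroup H] (φ : G →* H) :
    pTower p G →* pTower p H :=
  Pi.monoidHom fun m =>
    (QuotientGroup.map _ _ φ (pModRange_le_comap φ m)).comp (Pi.evalMonoidHom _ m)

/-- The `p`-completion `Ḡ = lim← G/G^{p^m}` of a commutative group `G`, as the subgroup of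
coherent sequences in the projective system. -/
def pCompletion (p : ℕ) (G : Type*) [CommGroup G] : Subgroup (pTower p G) where
  carrier := {f | ∀ m,
    QuotientGroup.map _ _ (MonoidHom.id G) (pModRange_succ_le p G m) (f (m + 1)) = f m}
  one_mem' := by intro m; simp
  mul_mem' := by
    intro a b ha hb m
    rw [Pi.mul_apply, Pi.mul_apply, map_mul, ha m, hb m]
  inv_mem' := by
    intro a ha m
    rw [Pi.inv_apply, Pi.inv_apply, map_inv, ha m]

/-- `Γ_n = Γ^{p^n}`, the subgroup of `Γ = Gal(E_∞/E) ≅ ℤ_p` corresponding to `p^n ℤ_p`. -/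
noncomputable def gammaSub (p : ℕ) [Fact p.Prime] {E Einf : Type*} [Field E] [Field Einf] [Algebra E Einf]
    (ρ : (Einf ≃ₐ[E] Einf) ≃* Multiplicative ℤ_[p]) (n : ℕ) : Subgroup (Einf ≃ₐ[E] Einf) :=
  Subgroup.comap ρ.toMonoidHom
    (powMonoidHom (p ^ n) : Multiplicative ℤ_[p] →* Multiplicative ℤ_[p]).range

/-- The `n`-th layer `E_n = E_∞^{Γ_n}` of the `ℤ_p`-extension `E_∞/E`. -/
noncomputable def zpLayer (p : ℕ) [Fact p.Prime] {E Einf : Type*} [Field E] [Field Einf] [Algebra E Einf]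
    (ρ : (Einf ≃ₐ[E] Einf) ≃* Multiplicative ℤ_[p]) (n : ℕ) : IntermediateField E Einf :=
  IntermediateField.fixedField (gammaSub p ρ n)

section

variable (p : ℕ) [Fact p.Prime] {E Einf : Type*} [Field E] [Field Einf] [Algebra E Einf]
  (ρ : (Einf ≃ₐ[E] Einf) ≃* Multiplicative ℤ_[p])
  (Nm : ∀ n : ℕ, (↥(zpLayer p ρ (n + 1)))ˣ →* (↥(zpLayer p ρ n))ˣ)

/-- `L_∞ = lim← L_n`: the inverse limit, along the norm maps, of the `p`-completions
`L_n` of the unit groups `E_nˣ` of the layers. -/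
noncomputable def normLimit : Subgroup (∀ n : ℕ, pTower p (↥(zpLayer p ρ n))ˣ) where
  carrier := {g | (∀ n, g n ∈ pCompletion p (↥(zpLayer p ρ n))ˣ) ∧
    ∀ n, pTowerMap p (Nm n) (g (n + 1)) = g n}
  one_mem' := ⟨fun n => (pCompletion p _).one_mem, fun n => by simp⟩
  mul_mem' := by
    rintro a b ⟨ha1, ha2⟩ ⟨hb1, hb2⟩
    refine ⟨fun n => (pCompletion p _).mul_mem (ha1 n) (hb1 n), fun n => ?_⟩
    rw [Pi.mul_apply, Pi.mul_apply, map_mul, ha2 n, hb2 n]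
  inv_mem' := by
    rintro a ⟨ha1, ha2⟩
    refine ⟨fun n => (pCompletion p _).inv_mem (ha1 n), fun n => ?_⟩
    rw [Pi.inv_apply, Pi.inv_apply, map_inv, ha2 n]

/-- Projection `L_∞ → L_n` from the inverse limit to the `p`-completion of the `n`-th
layer's units. -/
noncomputable def normLimitProj (n : ℕ) :
    ↥(normLimit p ρ Nm) →* ↥(pCompletion p (↥(zpLayer p ρ n))ˣ) :=
  MonoidHom.codRestrict ((Pi.evalMonoidHom _ n).comp (normLimit p ρ Nm).subtype) _
    (fun g => g.2.1 n)

end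


namespace LocDesc

/-- The quotient `|coker f| / |ker f|` of an endomorphism. -/
noncomputable def qf {A : Type*} [AddCommGroup A] (f : A →+ A) : ℚ :=
  (f.range.index : ℚ) / (Nat.card f.ker : ℚ)

/-- Kernel and cokernel are finite. -/
def FinQ {A : Type*} [AddCommGroup A] (f : A →+ A) : Prop :=
  f.range.index ≠ 0 ∧ Nat.card f.ker ≠ 0

lemma FinQ.pos {A : Type*} [AddCommGroup A] {f : A →+ A} (h : FinQ f) : 0 < qf f :=
  div_pos (by exact_mod_cast Nat.pos_of_ne_zero h.1) (by exact_mod_cast Nat.pos_of_ne_zero h.2)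

lemma card_split {A : Type*} [AddCommGroup A] (H K : AddSubgroup A) :
    Nat.card H = Nat.card (H ⊓ K : AddSubgroup A) * K.relIndex H := by
  have h := AddSubgroup.relIndex_mul_relIndex (⊥ : AddSubgroup A) (H ⊓ K) H bot_le inf_le_left
  rw [AddSubgroup.relIndex_bot_left, AddSubgroup.relIndex_bot_left,
    AddSubgroup.inf_relIndex_left] at h
  exact h.symm

/-- multiplicativity in compositions -/
lemma qf_comp {A : Type*} [AddCommGroup A] (f g : A →+ A) (hf : FinQ f) (hg : FinQ g) :
    FinQ (f.comp g) ∧ qf (f.comp g) = qf f * qf g := by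
  have e1 : (f.comp g).range.relIndex f.range = (g.range ⊔ f.ker).index := by
    have := AddSubgroup.relIndex_map_map f g.range ⊤
    rw [top_sup_eq, AddSubgroup.relIndex_top_right] at this
    rw [← this, AddMonoidHom.range_eq_map f, AddMonoidHom.range_comp]
  have e2 : (f.comp g).range.relIndex f.range * f.range.index = (f.comp g).range.index :=
    AddSubgroup.relIndex_mul_index (by rintro _ ⟨x, rfl⟩; exact ⟨g x, rfl⟩)
  have e3 : g.range.relIndex f.ker * (g.range ⊔ f.ker).index = g.range.index := by
    rw [← AddSubgroup.relIndex_sup_left (H := f.ker) (K := g.range)]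
    exact AddSubgroup.relIndex_mul_index le_sup_left
  have e4 := card_split f.ker g.range
  have e5 : Nat.card (f.comp g).ker = Nat.card g.ker * Nat.card (f.ker ⊓ g.range : AddSubgroup A) := by
    have h1 := card_split (f.comp g).ker g.ker
    have h2 : (f.comp g).ker ⊓ g.ker = g.ker := by
      apply inf_eq_right.2
      intro x hx
      simp only [AddMonoidHom.mem_ker, AddMonoidHom.comp_apply] at *
      simp [hx]
    have h3 : (f.comp g).ker.map g = f.ker ⊓ g.range := by
      ext y
      constructor
      · rintro ⟨x, hx, rfl⟩
        exact ⟨hx, ⟨x, rfl⟩⟩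
      · rintro ⟨hy, ⟨x, rfl⟩⟩
        exact ⟨x, hy, rfl⟩
    rw [h2, AddSubgroup.relIndex_ker, h3] at h1
    exact h1
  rw [e1] at e2
  obtain ⟨hf1, hf2⟩ := hf
  obtain ⟨hg1, hg2⟩ := hg
  unfold FinQ qf
  rw [← e2, e5]
  rw [← e3] at hg1 ⊢
  rw [e4] at hf2 ⊢
  have a1 := left_ne_zero_of_mul hg1
  have a2 := right_ne_zero_of_mul hg1
  have a3 := left_ne_zero_of_mul hf2
  have a4 := right_ne_zero_of_mul hf2
  refine ⟨⟨mul_ne_zero a2 hf1, mul_ne_zero hg2 a3⟩, ?_⟩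
  push_cast
  have b1 : (g.range.relIndex f.ker : ℚ) ≠ 0 := by exact_mod_cast a1
  have b3 : (Nat.card (f.ker ⊓ g.range : AddSubgroup A) : ℚ) ≠ 0 := by exact_mod_cast a3
  have b4 : (Nat.card g.ker : ℚ) ≠ 0 := by exact_mod_cast hg2
  field_simp

/-- multiplicativity in short exact sequences -/
lemma qf_exact {A D C : Type*} [AddCommGroup A] [AddCommGroup D] [AddCommGroup C]
    (ι : D →+ A) (π : A →+ C) (hι : Function.Injective ι) (hπ : Function.Surjective π)
    (hex : π.ker = ι.range) (f : A →+ A) (fD : D →+ D) (fC : C →+ C)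
    (h1 : ∀ x, f (ι x) = ι (fD x)) (h2 : ∀ x, π (f x) = fC (π x)) :
    (f.range.index : ℕ) * Nat.card fD.ker * Nat.card fC.ker =
      Nat.card f.ker * fD.range.index * fC.range.index ∧
    (FinQ f → FinQ fD → FinQ fC) ∧ (FinQ fD → FinQ fC → FinQ f) := by
  set E := ι.range with hE
  set P := E.comap f with hP
  have hEP : E ≤ P := by
    rintro _ ⟨x, rfl⟩
    exact ⟨fD x, (h1 x).symm⟩
  have c1 : fC.range.index = (f.range ⊔ E).index := by
    rw [← AddSubgroup.index_comap_of_surjective fC.range hπ]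
    congr 1
    ext x
    rw [AddSubgroup.mem_comap]
    constructor
    · rintro ⟨y, hy⟩
      obtain ⟨z, rfl⟩ := hπ y
      rw [← h2] at hy
      have : x - f z ∈ E := by rw [← hex, AddMonoidHom.mem_ker, map_sub, hy, sub_self]
      have h3 : x = f z + (x - f z) := by abel
      rw [h3]
      exact AddSubgroup.add_mem_sup ⟨z, rfl⟩ this
    · intro hx
      obtain ⟨_, ⟨z, rfl⟩, e, he, rfl⟩ := AddSubgroup.mem_sup.1 hx
      rw [← hex, AddMonoidHom.mem_ker] at he
      exact ⟨π z, by rw [map_add, he, add_zero, h2]⟩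
  have c2 : Nat.card fC.ker = E.relIndex P := by
    rw [← hex, AddSubgroup.relIndex_ker]
    congr 2
    ext y
    constructor
    · intro hy
      obtain ⟨z, rfl⟩ := hπ y
      refine ⟨z, ?_, rfl⟩
      change f z ∈ E
      rw [← hex, AddMonoidHom.mem_ker, h2]
      exact hy
    · rintro ⟨z, hz, rfl⟩
      change f z ∈ E at hz
      rw [← hex, AddMonoidHom.mem_ker, h2] at hz
      exact hz
  have c3 : f.range.relIndex E * (f.range ⊔ E).index = f.range.index := by
    rw [← AddSubgroup.relIndex_sup_left (H := E) (K := f.range)]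
    exact AddSubgroup.relIndex_mul_index le_sup_left
  have c4 : fD.range.index = (E.map f).relIndex (f.range ⊓ E) * f.range.relIndex E := by
    have : fD.range.index = (E.map f).relIndex E := by
      have h3 : E.map f = fD.range.map ι := by
        ext y
        constructor
        · rintro ⟨_, ⟨x, rfl⟩, rfl⟩
          exact ⟨fD x, ⟨x, rfl⟩, (h1 x).symm⟩
        · rintro ⟨_, ⟨x, rfl⟩, rfl⟩
          exact ⟨ι x, ⟨x, rfl⟩, h1 x⟩
      rw [h3, hE, AddMonoidHom.range_eq_map ι,
        AddSubgroup.relIndex_map_map_of_injective _ _ hι, AddSubgroup.relIndex_top_right]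
    rw [this, ← AddSubgroup.inf_relIndex_right f.range E]
    refine (AddSubgroup.relIndex_mul_relIndex _ _ _ (le_inf ?_ ?_) inf_le_right).symm
    · rintro _ ⟨x, _, rfl⟩
      exact ⟨x, rfl⟩
    · rintro _ ⟨x, hx, rfl⟩
      exact hEP hx
  have c5 : (E.map f).relIndex (f.range ⊓ E) = (E ⊔ f.ker).relIndex P := by
    have h3 : f.range ⊓ E = P.map f := by
      ext y
      constructor
      · rintro ⟨⟨x, rfl⟩, hy⟩
        exact ⟨x, hy, rfl⟩
      · rintro ⟨x, hx, rfl⟩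
        exact ⟨⟨x, rfl⟩, hx⟩
    rw [h3, AddSubgroup.relIndex_map_map]
    congr 1
    apply sup_eq_left.2
    intro x hx
    change f x ∈ E
    rw [(AddMonoidHom.mem_ker).1 hx]
    exact E.zero_mem
  have c6 : E.relIndex f.ker * (E ⊔ f.ker).relIndex P = E.relIndex P := by
    rw [← AddSubgroup.relIndex_sup_left (H := f.ker) (K := E)]
    refine AddSubgroup.relIndex_mul_relIndex _ _ _ le_sup_left (sup_le hEP ?_)
    intro x hx
    change f x ∈ E
    rw [(AddMonoidHom.mem_ker).1 hx]
    exact E.zero_mem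
  have c7 : Nat.card f.ker = Nat.card fD.ker * E.relIndex f.ker := by
    rw [card_split f.ker E]
    congr 1
    have h3 : f.ker ⊓ E = fD.ker.map ι := by
      ext y
      constructor
      · rintro ⟨hy, ⟨x, rfl⟩⟩
        refine ⟨x, ?_, rfl⟩
        apply hι
        rw [← h1, map_zero]
        exact hy
      · rintro ⟨x, hx, rfl⟩
        refine ⟨?_, ⟨x, rfl⟩⟩
        change f (ι x) = 0
        rw [h1, (AddMonoidHom.mem_ker).1 hx, map_zero]
    rw [h3]
    exact (Nat.card_congr (fD.ker.equivMapOfInjective ι hι).toEquiv).symm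
  rw [← c6] at c2
  rw [c5] at c4
  rw [← c1] at c3
  unfold FinQ
  rw [c2, ← c3, c4, c7]
  refine ⟨by ring, ?_, ?_⟩ <;> simp only [mul_ne_zero_iff] <;> tauto

lemma qf_exact' {A D C : Type*} [AddCommGroup A] [AddCommGroup D] [AddCommGroup C]
    (ι : D →+ A) (π : A →+ C) (hι : Function.Injective ι) (hπ : Function.Surjective π)
    (hex : π.ker = ι.range) (f : A →+ A) (fD : D →+ D) (fC : C →+ C)
    (h1 : ∀ x, f (ι x) = ι (fD x)) (h2 : ∀ x, π (f x) = fC (π x))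
    (a : FinQ f) (b : FinQ fD) (c : FinQ fC) : qf f = qf fD * qf fC := by
  obtain ⟨e, -, -⟩ := qf_exact ι π hι hπ hex f fD fC h1 h2
  unfold qf
  have e' : (f.range.index : ℚ) * Nat.card fD.ker * Nat.card fC.ker =
      Nat.card f.ker * fD.range.index * fC.range.index := by exact_mod_cast e
  have a2 : (Nat.card f.ker : ℚ) ≠ 0 := by exact_mod_cast a.2
  have b2 : (Nat.card fD.ker : ℚ) ≠ 0 := by exact_mod_cast b.2
  have c2 : (Nat.card fC.ker : ℚ) ≠ 0 := by exact_mod_cast c.2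
  field_simp
  linarith

lemma qf_finite {A : Type*} [AddCommGroup A] [Finite A] (f : A →+ A) : FinQ f ∧ qf f = 1 := by
  have h1 := AddSubgroup.card_mul_index f.ker
  rw [AddSubgroup.index_ker] at h1
  have h2 := AddSubgroup.card_mul_index f.range
  have h3 : Nat.card A ≠ 0 := Nat.card_pos.ne'
  have h4 : Nat.card f.ker = f.range.index := by
    rw [← h2, mul_comm] at h1
    refine Nat.eq_of_mul_eq_mul_left ?_ h1
    exact Nat.card_pos
  have h5 : f.range.index ≠ 0 := by
    intro h; rw [h, mul_zero] at h2; exact h3 h2.symm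
  refine ⟨⟨h5, by rw [h4]; exact h5⟩, ?_⟩
  unfold qf
  rw [h4, div_self (by exact_mod_cast h5)]

lemma poly_identity (p : ℕ) [hp : Fact p.Prime] :
    ∃ Q : Polynomial ℤ, ∏ i ∈ Finset.range (p - 1), (1 - Polynomial.X ^ (i + 1) : Polynomial ℤ) =
      (p : Polynomial ℤ) + Q * ∑ i ∈ Finset.range p, Polynomial.X ^ i := by
  have hz := Complex.isPrimitiveRoot_exp p hp.out.ne_zero
  set ζ := Complex.exp (2 * Real.pi * Complex.I / p)
  have h1 : Polynomial.cyclotomic p ℤ ∣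
      ∏ i ∈ Finset.range (p - 1), (1 - Polynomial.X ^ (i + 1) : Polynomial ℤ) - (p : Polynomial ℤ) := by
    rw [Polynomial.cyclotomic_eq_minpoly hz hp.out.pos]
    apply minpoly.isIntegrallyClosed_dvd (hz.isIntegral hp.out.pos)
    have h2 : p - 1 + 1 = p := Nat.succ_pred_prime hp.out
    rw [← h2] at hz
    have := hz.prod_one_sub_pow_eq_order
    simp only [map_sub, map_prod, map_one, map_pow, Polynomial.aeval_X, map_natCast]
    rw [this]
    push_cast [Nat.cast_sub hp.out.one_le]
    ring
  obtain ⟨Q, hQ⟩ := h1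
  refine ⟨Q, ?_⟩
  rw [← Polynomial.cyclotomic_prime ℤ p, mul_comm Q, ← hQ]
  ring

lemma End_mul_apply {B : Type*} [AddCommGroup B] (f g : AddMonoid.End B) (x : B) :
    (f * g) x = f (g x) := rfl

lemma End_sum_apply {B : Type*} [AddCommGroup B] (f : ℕ → AddMonoid.End B) (s : Finset ℕ) (x : B) :
    (∑ i ∈ s, f i : AddMonoid.End B) x = ∑ i ∈ s, f i x :=
  map_sum (AddMonoidHom.eval x : (B →+ B) →+ B) f s

lemma range_one_sub_pow {B : Type*} [AddCommGroup B] (τ : AddMonoid.End B) (j : ℕ) :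
    AddMonoidHom.range (1 - τ ^ j : AddMonoid.End B) ≤ AddMonoidHom.range (1 - τ : AddMonoid.End B) := by
  rintro _ ⟨x, rfl⟩
  refine ⟨(∑ i ∈ Finset.range j, τ ^ i : AddMonoid.End B) x, ?_⟩
  have h := mul_neg_geom_sum τ j
  rw [← h]
  rfl

lemma ker_one_sub_pow {B : Type*} [AddCommGroup B] (τ : AddMonoid.End B) (j : ℕ) :
    AddMonoidHom.ker (1 - τ : AddMonoid.End B) ≤ AddMonoidHom.ker (1 - τ ^ j : AddMonoid.End B) := by
  intro x hx
  have h := geom_sum_mul_neg τ j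
  have hx' : (1 - τ : AddMonoid.End B) x = 0 := hx
  change (1 - τ ^ j : AddMonoid.End B) x = 0
  rw [← h, End_mul_apply, hx', map_zero]

lemma qf_one_sub_pow {B : Type*} [AddCommGroup B] (p : ℕ) [hp : Fact p.Prime] (τ : AddMonoid.End B)
    (hτ : τ ^ p = 1) (i : ℕ) (h0 : 0 < i) (hi : i < p) :
    AddMonoidHom.range (1 - τ ^ i : AddMonoid.End B) = AddMonoidHom.range (1 - τ : AddMonoid.End B) ∧
    AddMonoidHom.ker (1 - τ ^ i : AddMonoid.End B) = AddMonoidHom.ker (1 - τ : AddMonoid.End B) := by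
  have hcop : Nat.Coprime i p := by
    rw [Nat.coprime_comm, hp.out.coprime_iff_not_dvd]
    intro h
    exact absurd (Nat.le_of_dvd h0 h) (by omega)
  obtain ⟨j, hj⟩ := Nat.exists_mul_mod_eq_one_of_coprime hcop hp.out.one_lt
  have hj' : (τ ^ i) ^ j = τ := by
    rw [← pow_mul, pow_eq_pow_mod _ hτ, hj.2, pow_one]
  constructor
  · apply le_antisymm (range_one_sub_pow τ i)
    have := range_one_sub_pow (τ ^ i) j
    rwa [hj'] at this
  · apply le_antisymm _ (ker_one_sub_pow τ i)
    have := ker_one_sub_pow (τ ^ i) j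
    rwa [hj'] at this

lemma qf_prime_eq {B : Type*} [AddCommGroup B] (p : ℕ) [hp : Fact p.Prime] (τ : AddMonoid.End B)
    (hτ : τ ^ p = 1) (hN : (∑ i ∈ Finset.range p, τ ^ i : AddMonoid.End B) = 0)
    (hB : FinQ (nsmulAddMonoidHom p : B →+ B)) :
    FinQ (1 - τ : AddMonoid.End B) ∧
      qf (nsmulAddMonoidHom p : B →+ B) = qf (1 - τ : AddMonoid.End B) ^ (p - 1) := by
  have hpid : (Polynomial.aeval τ (∏ i ∈ Finset.range (p - 1), (1 - Polynomial.X ^ (i + 1) : Polynomial ℤ))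
      : AddMonoid.End B) = (nsmulAddMonoidHom p : B →+ B) := by
    obtain ⟨Q, hQ⟩ := poly_identity p
    rw [hQ]
    simp only [map_add, map_mul, map_natCast, map_sum, map_pow, Polynomial.aeval_X, hN, mul_zero,
      add_zero]
    ext x
    simp only [AddMonoid.End.natCast_apply]
    rfl
  have hone : 0 < p - 1 := Nat.sub_pos_of_lt hp.out.one_lt
  have hfin : FinQ (1 - τ : AddMonoid.End B) := by
    obtain ⟨k, hk⟩ := Nat.exists_eq_succ_of_ne_zero hone.ne'
    have hd : ∃ R : Polynomial ℤ, ∏ i ∈ Finset.range (p - 1), (1 - Polynomial.X ^ (i + 1) : Polynomial ℤ)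
        = (1 - Polynomial.X) * R := by
      obtain ⟨R, hR⟩ := Finset.dvd_prod_of_mem (fun i => (1 - Polynomial.X ^ (i + 1) : Polynomial ℤ))
        (Finset.mem_range.2 hone)
      exact ⟨R, by simpa using hR⟩
    obtain ⟨R, hR⟩ := hd
    have e1 : (nsmulAddMonoidHom p : B →+ B) = ((1 - τ) * Polynomial.aeval τ R : AddMonoid.End B) := by
      rw [← hpid, hR]; simp; rfl
    have e2 : (nsmulAddMonoidHom p : B →+ B) = (Polynomial.aeval τ R * (1 - τ) : AddMonoid.End B) := by
      rw [← hpid, hR, mul_comm]; simp; rfl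
    constructor
    · have : AddMonoidHom.range (nsmulAddMonoidHom p : B →+ B) ≤ AddMonoidHom.range (1 - τ : AddMonoid.End B) := by
        rw [e1]
        rintro _ ⟨x, rfl⟩
        exact ⟨_, rfl⟩
      exact ne_zero_of_dvd_ne_zero hB.1 (AddSubgroup.index_dvd_of_le this)
    · have : AddMonoidHom.ker (1 - τ : AddMonoid.End B) ≤ AddMonoidHom.ker (nsmulAddMonoidHom p : B →+ B) := by
        rw [e2]
        intro x hx
        have hx' : (1 - τ : AddMonoid.End B) x = 0 := hx
        change (Polynomial.aeval τ R * (1 - τ) : AddMonoid.End B) x = 0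
        rw [End_mul_apply, hx', map_zero]
      exact ne_zero_of_dvd_ne_zero hB.2 (AddSubgroup.card_dvd_of_le this)
  refine ⟨hfin, ?_⟩
  have key : ∀ n, n ≤ p - 1 →
      FinQ (Polynomial.aeval τ (∏ i ∈ Finset.range n, (1 - Polynomial.X ^ (i + 1) : Polynomial ℤ)) : AddMonoid.End B) ∧
      qf (Polynomial.aeval τ (∏ i ∈ Finset.range n, (1 - Polynomial.X ^ (i + 1) : Polynomial ℤ)) : AddMonoid.End B)
        = qf (1 - τ : AddMonoid.End B) ^ n := by
    intro n
    induction n with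
    | zero =>
      intro _
      have hr : AddMonoidHom.range (1 : AddMonoid.End B) = ⊤ :=
        AddMonoidHom.range_eq_top.2 (fun x => ⟨x, rfl⟩)
      have hk : AddMonoidHom.ker (1 : AddMonoid.End B) = ⊥ :=
        (AddMonoidHom.ker_eq_bot_iff _).2 (fun x y h => h)
      simp [FinQ, qf, hr, hk]
    | succ n ih =>
      intro hn
      obtain ⟨i1, i2⟩ := ih (by omega)
      obtain ⟨j1, j2⟩ := qf_one_sub_pow p τ hτ (n + 1) (by omega) (by omega)
      have hF : FinQ (1 - τ ^ (n + 1) : AddMonoid.End B) := by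
        unfold FinQ; rw [j1, j2]; exact hfin
      have hq : qf (1 - τ ^ (n + 1) : AddMonoid.End B) = qf (1 - τ : AddMonoid.End B) := by
        unfold qf; rw [j1, j2]
      rw [Finset.prod_range_succ, map_mul]
      have e : (Polynomial.aeval τ (1 - Polynomial.X ^ (n + 1) : Polynomial ℤ) : AddMonoid.End B) =
        1 - τ ^ (n + 1) := by simp
      rw [e]
      obtain ⟨k1, k2⟩ := qf_comp _ _ i1 hF
      refine ⟨k1, ?_⟩
      have e2 := pow_succ (qf (1 - τ : AddMonoid.End B)) n
      rw [e2, ← i2, ← hq]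
      exact k2
  have := (key (p - 1) le_rfl).2
  rw [hpid] at this
  exact this

/-- The norm index computation. -/
theorem norm_index {A : Type*} [AddCommGroup A] (p : ℕ) [hp : Fact p.Prime] (σ : AddMonoid.End A)
    (hσ : σ ^ p = 1)
    (h90 : ∀ a, (∑ i ∈ Finset.range p, σ ^ i : AddMonoid.End A) a = 0 → ∃ b, a = b - σ b)
    (c : ℚ) (hc : 0 < c)
    (hA : FinQ (nsmulAddMonoidHom p : A →+ A))
    (hqA : qf (nsmulAddMonoidHom p : A →+ A) = p * c ^ p)
    (hD : FinQ (nsmulAddMonoidHom p : AddMonoidHom.ker (1 - σ : AddMonoid.End A) →+ _))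
    (hqD : qf (nsmulAddMonoidHom p : AddMonoidHom.ker (1 - σ : AddMonoid.End A) →+ _) = p * c) :
    (AddMonoidHom.range (∑ i ∈ Finset.range p, σ ^ i : AddMonoid.End A)).relIndex
      (AddMonoidHom.ker (1 - σ : AddMonoid.End A)) = p := by
  set s : AddMonoid.End A := 1 - σ with hs
  set N : AddMonoid.End A := ∑ i ∈ Finset.range p, σ ^ i with hN
  set D := AddMonoidHom.ker s with hDdef
  set B := AddMonoidHom.range s with hBdef
  have hsN : s * N = 0 := by rw [hs, hN, mul_neg_geom_sum, hσ, sub_self]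
  have hNs : N * s = 0 := by rw [hs, hN, geom_sum_mul_neg, hσ, sub_self]
  have hsσ : ∀ x, σ (s x) = s (σ x) := by
    intro x
    change (σ * s) x = (s * σ) x
    rw [hs]; congr 1; noncomm_ring
  have hkerN : AddMonoidHom.ker N = B := by
    ext x
    constructor
    · intro hx
      obtain ⟨b, rfl⟩ := h90 x hx
      exact ⟨b, rfl⟩
    · rintro ⟨b, rfl⟩
      change (N * s) b = 0
      rw [hNs]; rfl
  have hσB : ∀ x : B, σ x ∈ B := by
    rintro ⟨_, ⟨x, rfl⟩⟩
    exact ⟨σ x, (hsσ x).symm⟩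
  let τ : AddMonoid.End B := (AddMonoidHom.comp σ B.subtype).codRestrict B hσB
  have hτ1 : ∀ x : B, ((τ x : B) : A) = σ x := fun x => rfl
  have hτi : ∀ (i : ℕ) (x : B), (((τ ^ i) x : B) : A) = (σ ^ i) x := by
    intro i
    induction i with
    | zero => intro x; rfl
    | succ i ih =>
      intro x
      rw [pow_succ, pow_succ, End_mul_apply, End_mul_apply, ih, hτ1]
  have hτp : τ ^ p = 1 := by
    ext x
    rw [hτi, hσ]; rfl
  have hτN : (∑ i ∈ Finset.range p, τ ^ i : AddMonoid.End B) = 0 := by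
    ext x
    have h1 : N (x : A) = 0 := by
      have : (x : A) ∈ AddMonoidHom.ker N := by rw [hkerN]; exact x.2
      exact this
    have h2 : (((∑ i ∈ Finset.range p, τ ^ i : AddMonoid.End B) x : B) : A) = N x := by
      rw [hN, End_sum_apply, End_sum_apply, AddSubgroup.val_finsetSum]
      exact Finset.sum_congr rfl (fun i _ => hτi i x)
    rw [h2, h1]; rfl
  have hpiD : (AddMonoidHom.rangeRestrict s).ker = D.subtype.range := by
    rw [AddSubgroup.range_subtype]; exact AddMonoidHom.ker_rangeRestrict (f := s)
  have ex := qf_exact D.subtype (AddMonoidHom.rangeRestrict s) D.subtype_injective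
    (AddMonoidHom.rangeRestrict_surjective s) hpiD (nsmulAddMonoidHom p)
    (nsmulAddMonoidHom p) (nsmulAddMonoidHom p) (fun x => by simp) (fun x => by simp)
  have hB := ex.2.1 hA hD
  have hq := qf_exact' D.subtype (AddMonoidHom.rangeRestrict s) D.subtype_injective
    (AddMonoidHom.rangeRestrict_surjective s) hpiD (nsmulAddMonoidHom p)
    (nsmulAddMonoidHom p) (nsmulAddMonoidHom p) (fun x => by simp) (fun x => by simp) hA hD hB
  obtain ⟨hT, hqT⟩ := qf_prime_eq p τ hτp hτN hB
  have hp0 : (0 : ℚ) < p := by exact_mod_cast hp.out.pos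
  have hqTc : qf (1 - τ : AddMonoid.End B) = c := by
    have h1 : qf (1 - τ : AddMonoid.End B) ^ (p - 1) = c ^ (p - 1) := by
      rw [← hqT]
      rw [hqA, hqD] at hq
      have h2 : c ^ p = c * c ^ (p - 1) := by
        rw [← pow_succ', Nat.sub_add_cancel hp.out.one_le]
      rw [h2] at hq
      have h3 : (p : ℚ) * c ≠ 0 := by positivity
      apply mul_left_cancel₀ h3
      rw [← hq]; ring
    have h4 : p - 1 ≠ 0 := (Nat.sub_pos_of_lt hp.out.one_lt).ne'
    exact (pow_left_inj₀ hT.pos.le hc.le h4).1 h1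
  have i1 : (AddMonoidHom.range (nsmulAddMonoidHom p : D →+ D)).index =
      AddSubgroup.index (AddMonoidHom.range (1 - τ : AddMonoid.End B)) *
        (AddMonoidHom.range N).relIndex D := by
    have hND : ∀ x ∈ D, N x = p • x := by
      intro x hx
      have hx' : x - σ x = 0 := hx
      have hx2 : σ x = x := (sub_eq_zero.1 hx').symm
      have h3 : ∀ i, (σ ^ i) x = x := by
        intro i
        induction i with
        | zero => rfl
        | succ i ih => rw [pow_succ, End_mul_apply, hx2, ih]
      rw [hN, End_sum_apply]
      simp [h3]
    have j1 : (AddMonoidHom.range (nsmulAddMonoidHom p : D →+ D)).index = (D.map N).relIndex D := by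
      have h4 : D.map N = (AddMonoidHom.range (nsmulAddMonoidHom p : D →+ D)).map D.subtype := by
        ext y
        constructor
        · rintro ⟨x, hx, rfl⟩
          exact ⟨p • ⟨x, hx⟩, ⟨⟨x, hx⟩, rfl⟩, (hND x hx).symm⟩
        · rintro ⟨_, ⟨x, rfl⟩, rfl⟩
          exact ⟨x, x.2, hND x x.2⟩
      rw [h4]
      have h5 := AddSubgroup.relIndex_map_map_of_injective
        (AddMonoidHom.range (nsmulAddMonoidHom p : D →+ D)) ⊤ D.subtype_injective
      rw [← AddMonoidHom.range_eq_map, AddSubgroup.range_subtype,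
        AddSubgroup.relIndex_top_right] at h5
      exact h5.symm
    have j2 : (D.map N).relIndex D = (D.map N).relIndex (AddMonoidHom.range N) *
        (AddMonoidHom.range N).relIndex D := by
      refine (AddSubgroup.relIndex_mul_relIndex _ _ _ ?_ ?_).symm
      · rintro _ ⟨x, _, rfl⟩; exact ⟨x, rfl⟩
      · rintro _ ⟨x, rfl⟩
        change (s * N) x = 0
        rw [hsN]; rfl
    have j3 : (D.map N).relIndex (AddMonoidHom.range N) = (D ⊔ B).index := by
      have := AddSubgroup.relIndex_map_map N D ⊤
      rw [top_sup_eq, AddSubgroup.relIndex_top_right, hkerN] at this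
      rw [← this, AddMonoidHom.range_eq_map N]
    have j4 : (D ⊔ B).index = AddSubgroup.index (AddMonoidHom.range (1 - τ : AddMonoid.End B)) := by
      have := AddSubgroup.relIndex_map_map s B ⊤
      rw [top_sup_eq, AddSubgroup.relIndex_top_right, ← hDdef, sup_comm] at this
      rw [← this, ← AddMonoidHom.range_eq_map s, ← hBdef]
      have h4 : B.map s = (AddMonoidHom.range (1 - τ : AddMonoid.End B)).map B.subtype := by
        ext y
        constructor
        · rintro ⟨x, hx, rfl⟩
          exact ⟨(1 - τ : AddMonoid.End B) ⟨x, hx⟩, ⟨⟨x, hx⟩, rfl⟩, rfl⟩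
        · rintro ⟨_, ⟨x, rfl⟩, rfl⟩
          exact ⟨x, x.2, rfl⟩
      rw [h4]
      have h5 := AddSubgroup.relIndex_map_map_of_injective
        (AddMonoidHom.range (1 - τ : AddMonoid.End B)) ⊤ B.subtype_injective
      rw [← AddMonoidHom.range_eq_map, AddSubgroup.range_subtype,
        AddSubgroup.relIndex_top_right] at h5
      exact h5
    rw [j1, j2, j3, j4]
  have i2 : Nat.card (AddMonoidHom.ker (nsmulAddMonoidHom p : D →+ D)) =
      Nat.card (AddMonoidHom.ker (1 - τ : AddMonoid.End B)) := by
    have hND : ∀ x ∈ D, N x = p • x := by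
      intro x hx
      have hx' : x - σ x = 0 := hx
      have hx2 : σ x = x := (sub_eq_zero.1 hx').symm
      have h3 : ∀ i, (σ ^ i) x = x := by
        intro i
        induction i with
        | zero => rfl
        | succ i ih => rw [pow_succ, End_mul_apply, hx2, ih]
      rw [hN, End_sum_apply]
      simp [h3]
    have k1 := Nat.card_congr ((AddMonoidHom.ker (nsmulAddMonoidHom p : D →+ D)).equivMapOfInjective
      D.subtype D.subtype_injective).toEquiv
    have k2 := Nat.card_congr ((AddMonoidHom.ker (1 - τ : AddMonoid.End B)).equivMapOfInjective
      B.subtype B.subtype_injective).toEquiv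
    rw [k1, k2]
    congr 2
    ext y
    constructor
    · rintro ⟨x, hx, rfl⟩
      have hx1 : p • x = 0 := hx
      have hx2 : N (x : A) = 0 := by rw [hND x x.2, ← AddSubgroup.coe_nsmul, hx1]; rfl
      have hx3 : (x : A) ∈ B := by rw [← hkerN]; exact hx2
      refine ⟨⟨x, hx3⟩, ?_, rfl⟩
      apply Subtype.ext
      exact x.2
    · rintro ⟨x, hx, rfl⟩
      have hx0 : (1 - τ : AddMonoid.End B) x = 0 := hx
      have hx1 : (x : A) ∈ D := congrArg Subtype.val hx0
      refine ⟨⟨x, hx1⟩, ?_, rfl⟩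
      apply Subtype.ext
      change p • (x : A) = 0
      rw [← hND x hx1]
      have : (x : A) ∈ AddMonoidHom.ker N := by rw [hkerN]; exact x.2
      exact this
  have e1 := hqD
  unfold qf at e1 hqTc
  rw [i1, i2] at e1
  have m : (Nat.card (AddMonoidHom.ker (1 - τ : AddMonoid.End B)) : ℚ) ≠ 0 := by exact_mod_cast hT.2
  have m2 : (AddSubgroup.index (AddMonoidHom.range (1 - τ : AddMonoid.End B)) : ℚ) ≠ 0 := by
    exact_mod_cast hT.1
  rw [← hqTc] at e1
  push_cast at e1
  field_simp at e1
  exact_mod_cast e1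

end LocDesc

namespace LocDesc

section Normed
variable {F : Type*} [NormedField F] [IsUltrametricDist F]

/-- Additive closed ball. -/
def ballA (F : Type*) [NormedField F] [IsUltrametricDist F] (r : ℝ) (hr : 0 ≤ r) : AddSubgroup F where
  carrier := {x | ‖x‖ ≤ r}
  zero_mem' := by simpa using hr
  add_mem' := by
    intro a b ha hb
    exact (IsUltrametricDist.norm_add_le_max a b).trans (max_le ha hb)
  neg_mem' := by intro a ha; simpa using ha

lemma norm_eq_one_of_sub_le {x : F} {r : ℝ} (hr : r < 1) (hx : ‖x - 1‖ ≤ r) : ‖x‖ = 1 := by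
  have h1 : ‖x‖ = ‖(x - 1) + 1‖ := by rw [sub_add_cancel]
  rw [h1, IsUltrametricDist.norm_add_eq_max_of_norm_ne_norm]
  · rw [norm_one, max_eq_right]; linarith
  · rw [norm_one]; linarith

lemma norm_mul_sub_one_le {x y : F} {r : ℝ} (hr : r < 1) (hx : ‖x - 1‖ ≤ r) (hy : ‖y - 1‖ ≤ r) :
    ‖x * y - 1‖ ≤ r := by
  have h1 : x * y - 1 = x * (y - 1) + (x - 1) := by ring
  rw [h1]
  refine (IsUltrametricDist.norm_add_le_max _ _).trans (max_le ?_ hx)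
  rw [norm_mul, norm_eq_one_of_sub_le hr hx, one_mul]
  exact hy

/-- Unit group ball. -/
def ballU (F : Type*) [NormedField F] [IsUltrametricDist F] (r : ℝ) (hr0 : 0 ≤ r) (hr : r < 1) :
    Subgroup Fˣ where
  carrier := {x | ‖(x : F) - 1‖ ≤ r}
  one_mem' := by simpa using hr0
  mul_mem' := by
    intro a b ha hb
    exact norm_mul_sub_one_le hr ha hb
  inv_mem' := by
    intro a ha
    have ha' : ‖(a : F) - 1‖ ≤ r := ha
    have h1 : ((a⁻¹ : Fˣ) : F) - 1 = -((a⁻¹ : Fˣ) : F) * ((a : F) - 1) := by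
      have := a.inv_mul
      linear_combination this
    have h2 : ‖((a⁻¹ : Fˣ) : F)‖ = 1 := by
      rw [Units.val_inv_eq_inv_val, norm_inv, norm_eq_one_of_sub_le hr ha', inv_one]
    change ‖((a⁻¹ : Fˣ) : F) - 1‖ ≤ r
    rw [h1, norm_mul, norm_neg, h2, one_mul]
    exact ha'

lemma norm_pow_sub_one_le {x : F} {r : ℝ} (hr0 : 0 ≤ r) (hr : r < 1) (hx : ‖x - 1‖ ≤ r) (n : ℕ) :
    ‖x ^ n - 1‖ ≤ r := by
  induction n with
  | zero => simpa using hr0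
  | succ n ih => rw [pow_succ]; exact norm_mul_sub_one_le hr ih hx

lemma geom_near {p : ℕ} {r : ℝ} (hr0 : 0 ≤ r) (hr : r < 1) {x y : F} (hx : ‖x - 1‖ ≤ r)
    (hy : ‖y - 1‖ ≤ r) :
    ‖(∑ i ∈ Finset.range p, x ^ i * y ^ (p - 1 - i)) - (p : F)‖ ≤ r := by
  have h1 : (∑ i ∈ Finset.range p, x ^ i * y ^ (p - 1 - i)) - (p : F) =
      ∑ i ∈ Finset.range p, (x ^ i * y ^ (p - 1 - i) - 1) := by
    rw [Finset.sum_sub_distrib]; simp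
  rw [h1]
  refine IsUltrametricDist.norm_sum_le_of_forall_le_of_nonneg hr0 (fun i _ => ?_)
  exact norm_mul_sub_one_le hr (norm_pow_sub_one_le hr0 hr hx _) (norm_pow_sub_one_le hr0 hr hy _)

lemma norm_pow_sub_pow {p : ℕ} {r : ℝ} (hr0 : 0 ≤ r) (hr : r < 1) (hrp : r < ‖(p : F)‖) {x y : F}
    (hx : ‖x - 1‖ ≤ r) (hy : ‖y - 1‖ ≤ r) :
    ‖x ^ p - y ^ p‖ = ‖(p : F)‖ * ‖x - y‖ := by
  rw [← (Commute.all x y).geom_sum₂_mul, norm_mul]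
  congr 1
  have h := geom_near (p := p) hr0 hr hx hy
  set S := ∑ i ∈ Finset.range p, x ^ i * y ^ (p - 1 - i)
  have h1 : S = (S - p) + p := by ring
  rw [h1, IsUltrametricDist.norm_add_eq_max_of_norm_ne_norm]
  · rw [max_eq_right]; linarith
  · linarith

lemma exists_root [CompleteSpace F] {p : ℕ} {r : ℝ} (hr0 : 0 ≤ r) (hr : r < 1) (hrp : r < ‖(p : F)‖)
    {z : F} (hz : ‖z - 1‖ ≤ ‖(p : F)‖ * r) : ∃ x : F, ‖x - 1‖ ≤ r ∧ x ^ p = z := by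
  have hp0 : 0 < ‖(p : F)‖ := lt_of_le_of_lt hr0 hrp
  have hpne : (p : F) ≠ 0 := norm_pos_iff.1 hp0
  let T : F → F := fun x => x - (x ^ p - z) / p
  have hmaps : Set.MapsTo T (Metric.closedBall 1 r) (Metric.closedBall 1 r) := by
    intro x hx
    rw [mem_closedBall_iff_norm] at hx ⊢
    have e : T x - 1 = (x - 1) + ((z - 1) / p - (x ^ p - 1 ^ p) / p) := by
      simp only [T, one_pow]; ring
    rw [e]
    refine (IsUltrametricDist.norm_add_le_max _ _).trans (max_le hx ?_)
    rw [sub_eq_add_neg]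
    refine (IsUltrametricDist.norm_add_le_max _ _).trans (max_le ?_ ?_)
    · rw [norm_div, div_le_iff₀ hp0]; linarith
    · rw [norm_neg, norm_div, norm_pow_sub_pow hr0 hr hrp hx (by simpa using hr0),
        mul_div_cancel_left₀ _ hp0.ne']
      exact hx
  have hlip : ∀ x ∈ Metric.closedBall (1 : F) r, ∀ y ∈ Metric.closedBall (1 : F) r,
      dist (T x) (T y) ≤ (r / ‖(p : F)‖) * dist x y := by
    intro x hx y hy
    rw [mem_closedBall_iff_norm] at hx hy
    have h := geom_near (p := p) hr0 hr hx hy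
    have hg := (Commute.all x y).geom_sum₂_mul p
    set S := ∑ i ∈ Finset.range p, x ^ i * y ^ (p - 1 - i)
    have e : T x - T y = -((S - p) / p) * (x - y) := by
      simp only [T]
      field_simp
      linear_combination (1 : F) * hg
    rw [dist_eq_norm, dist_eq_norm, e, norm_mul, norm_neg, norm_div]
    gcongr
  have hq : r / ‖(p : F)‖ < 1 := (div_lt_one hp0).2 hrp
  have hcon : ContractingWith (⟨r / ‖(p : F)‖, by positivity⟩ : NNReal)
      (hmaps.restrict T (Metric.closedBall 1 r) (Metric.closedBall 1 r)) := by
    refine ⟨by exact_mod_cast hq, LipschitzWith.of_dist_le_mul ?_⟩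
    rintro ⟨x, hx⟩ ⟨y, hy⟩
    exact hlip x hx y hy
  have hcl : IsComplete (Metric.closedBall (1 : F) r) := Metric.isClosed_closedBall.isComplete
  obtain ⟨x, hx, hfix, -⟩ := hcon.exists_fixedPoint' hcl hmaps (x := 1)
    (Metric.mem_closedBall_self hr0) (edist_ne_top _ _)
  refine ⟨x, mem_closedBall_iff_norm.1 hx, ?_⟩
  have h1 : x - (x ^ p - z) / p = x := hfix
  have h2 : (x ^ p - z) / p = 0 := by linear_combination -h1
  rw [div_eq_zero_iff] at h2
  rcases h2 with h2 | h2
  · exact sub_eq_zero.1 h2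
  · exact absurd h2 hpne

lemma ker_bot_of_inj {A : Type*} [AddCommGroup A] {f : A →+ A} (hf : Function.Injective f) :
    Nat.card f.ker = 1 := by
  rw [(AddMonoidHom.ker_eq_bot_iff f).2 hf]; simp

/-- Comparison of multiplicative and additive `p`-quotients. -/
lemma ballU_compare [CompleteSpace F] {p : ℕ} {r : ℝ} (hr0 : 0 < r) (hr : r < 1)
    (hrp : r < ‖(p : F)‖) (hp1 : ‖(p : F)‖ ≤ 1) :
    (AddMonoidHom.range (nsmulAddMonoidHom p : Additive (ballU F r hr0.le hr) →+ _)).index =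
      (AddMonoidHom.range (nsmulAddMonoidHom p : ballA F r hr0.le →+ _)).index ∧
    Nat.card (AddMonoidHom.ker (nsmulAddMonoidHom p : Additive (ballU F r hr0.le hr) →+ _)) = 1 ∧
    Nat.card (AddMonoidHom.ker (nsmulAddMonoidHom p : ballA F r hr0.le →+ _)) = 1 := by
  have hp0 : 0 < ‖(p : F)‖ := hr0.trans hrp
  have hpne : (p : F) ≠ 0 := norm_pos_iff.1 hp0
  have hs0 : 0 ≤ ‖(p : F)‖ * r := by positivity
  have hsr : ‖(p : F)‖ * r ≤ r := by nlinarith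
  refine ⟨?_, ?_, ?_⟩
  · let V := ballU F r hr0.le hr
    let L := ballA F r hr0.le
    let L' := ballA F (‖(p : F)‖ * r) hs0
    let f : Additive V →+ F ⧸ L' :=
      { toFun := fun u => QuotientAddGroup.mk ((((u.toMul : V) : Fˣ) : F) - 1)
        map_zero' := by simp
        map_add' := by
          intro u v
          rw [← QuotientAddGroup.mk_add, QuotientAddGroup.eq]
          change ‖_‖ ≤ ‖(p : F)‖ * r
          have hu : ‖(((u.toMul : V) : Fˣ) : F) - 1‖ ≤ r := u.toMul.2
          have hv : ‖(((v.toMul : V) : Fˣ) : F) - 1‖ ≤ r := v.toMul.2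
          rw [toMul_add, Subgroup.coe_mul, Units.val_mul]
          set a := (((u.toMul : V) : Fˣ) : F)
          set b := (((v.toMul : V) : Fˣ) : F)
          have e : -(a * b - 1) + (a - 1 + (b - 1)) = -((a - 1) * (b - 1)) := by ring
          rw [e, norm_neg, norm_mul]
          have := mul_le_mul hu hv (norm_nonneg _) hr0.le
          nlinarith }
    have hfk : f.ker = AddMonoidHom.range (nsmulAddMonoidHom p : Additive V →+ _) := by
      ext u
      constructor
      · intro hu
        have hu1 : (QuotientAddGroup.mk ((((u.toMul : V) : Fˣ) : F) - 1) : F ⧸ L') = 0 := hu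
        rw [QuotientAddGroup.eq_zero_iff] at hu1
        obtain ⟨x, hx, hxp⟩ := exists_root hr0.le hr hrp (z := (((u.toMul : V) : Fˣ) : F)) hu1
        have hx0 : x ≠ 0 := by
          rintro rfl
          have := norm_eq_one_of_sub_le hr hx
          simp at this
        refine ⟨Additive.ofMul (⟨Units.mk0 x hx0, hx⟩ : V), ?_⟩
        apply Additive.toMul.injective
        apply Subtype.ext
        apply Units.ext
        exact hxp
      · rintro ⟨v, rfl⟩
        change (QuotientAddGroup.mk _ : F ⧸ L') = 0
        rw [QuotientAddGroup.eq_zero_iff]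
        change ‖(((v.toMul : V) : Fˣ) : F) ^ p - 1‖ ≤ ‖(p : F)‖ * r
        have hv : ‖(((v.toMul : V) : Fˣ) : F) - 1‖ ≤ r := v.toMul.2
        have := norm_pow_sub_pow (p := p) (y := (1 : F)) hr0.le hr hrp hv (by simpa using hr0.le)
        rw [one_pow] at this
        rw [this]
        gcongr
    let g : L →+ F ⧸ L' := (QuotientAddGroup.mk' L').comp L.subtype
    have hgk : g.ker = AddMonoidHom.range (nsmulAddMonoidHom p : L →+ _) := by
      ext u
      constructor
      · intro hu
        have hu1 : (QuotientAddGroup.mk (u : F) : F ⧸ L') = 0 := hu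
        rw [QuotientAddGroup.eq_zero_iff] at hu1
        have hu2 : ‖(u : F)‖ ≤ ‖(p : F)‖ * r := hu1
        refine ⟨⟨(u : F) / p, ?_⟩, ?_⟩
        · change ‖_‖ ≤ r
          rw [norm_div, div_le_iff₀ hp0]; linarith
        · apply Subtype.ext
          change p • ((u : F) / p) = u
          rw [nsmul_eq_mul]; field_simp
      · rintro ⟨v, rfl⟩
        change (QuotientAddGroup.mk _ : F ⧸ L') = 0
        rw [QuotientAddGroup.eq_zero_iff]
        change ‖p • (v : F)‖ ≤ ‖(p : F)‖ * r
        rw [nsmul_eq_mul, norm_mul]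
        have hv : ‖(v : F)‖ ≤ r := v.2
        gcongr
    rw [← hfk, ← hgk, AddSubgroup.index_ker, AddSubgroup.index_ker]
    congr 2
    ext y
    constructor
    · rintro ⟨u, rfl⟩
      exact ⟨⟨(((u.toMul : V) : Fˣ) : F) - 1, u.toMul.2⟩, rfl⟩
    · rintro ⟨v, rfl⟩
      have hv : ‖(v : F)‖ ≤ r := v.2
      have hx : ‖((v : F) + 1) - 1‖ ≤ r := by simpa using hv
      have hx0 : (v : F) + 1 ≠ 0 := by
        intro h
        rw [h] at hx
        have := norm_eq_one_of_sub_le hr hx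
        simp at this
      refine ⟨Additive.ofMul (⟨Units.mk0 ((v : F) + 1) hx0, hx⟩ : V), ?_⟩
      change (QuotientAddGroup.mk (((v : F) + 1) - 1) : F ⧸ L') = QuotientAddGroup.mk (v : F)
      rw [add_sub_cancel_right]
  · apply ker_bot_of_inj
    intro u v huv
    apply Additive.toMul.injective
    apply Subtype.ext
    apply Units.ext
    have h1 : (((u.toMul : ballU F r hr0.le hr) : Fˣ) : F) ^ p = (((v.toMul : ballU F r hr0.le hr) : Fˣ) : F) ^ p := by
      have := congrArg (fun w : Additive (ballU F r hr0.le hr) => (((w.toMul : ballU F r hr0.le hr) : Fˣ) : F)) huv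
      exact this
    have := norm_pow_sub_pow hr0.le hr hrp (u.toMul.2) (v.toMul.2)
    rw [h1, sub_self, norm_zero] at this
    have h2 := (mul_eq_zero.1 this.symm).resolve_left hp0.ne'
    exact sub_eq_zero.1 (norm_eq_zero.1 h2)
  · apply ker_bot_of_inj
    intro u v huv
    apply Subtype.ext
    have h1 : p • (u : F) = p • (v : F) := congrArg Subtype.val huv
    rw [nsmul_eq_mul, nsmul_eq_mul] at h1
    exact mul_left_cancel₀ hpne h1

end Normed

lemma finite_quot_of_ball {F : Type*} [NormedField F] [IsUltrametricDist F] [ProperSpace F]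
    (r : ℝ) (hr : 0 ≤ r) (H : AddSubgroup (ballA F r hr)) (δ : ℝ) (hδ : 0 < δ)
    (h : ∀ x : ballA F r hr, ‖(x : F)‖ < δ → x ∈ H) : Finite (ballA F r hr ⧸ H) := by
  have hc : IsCompact (Metric.closedBall (0 : F) r) := isCompact_closedBall 0 r
  obtain ⟨t, hts, htf, hcov⟩ := hc.finite_cover_balls hδ
  have := htf.to_subtype
  let φ : t → (ballA F r hr ⧸ H) := fun x => QuotientAddGroup.mk ⟨x, by
    have := hts x.2
    rw [mem_closedBall_zero_iff] at this
    exact this⟩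
  apply Finite.of_surjective φ
  intro y
  obtain ⟨x, rfl⟩ := QuotientAddGroup.mk_surjective y
  have hx : (x : F) ∈ Metric.closedBall (0 : F) r := mem_closedBall_zero_iff.2 x.2
  obtain ⟨z, hz, hxz⟩ := Set.mem_iUnion₂.1 (hcov hx)
  refine ⟨⟨z, hz⟩, ?_⟩
  rw [QuotientAddGroup.eq]
  apply h
  rw [mem_ball_iff_norm] at hxz
  have e : (((-⟨z, by
    have := hts hz
    rw [mem_closedBall_zero_iff] at this
    exact this⟩ + x : ballA F r hr)) : F) = (x : F) - z := by
    simp; ring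
  rw [e]
  exact hxz

/-- The constant `|ℤ_ℓ / p|`. -/
noncomputable def cst (p ℓ : ℕ) [Fact ℓ.Prime] : ℚ := qf (nsmulAddMonoidHom p : ℤ_[ℓ] →+ ℤ_[ℓ])

lemma padic_norm_prime (p ℓ : ℕ) [hp : Fact p.Prime] [hℓ : Fact ℓ.Prime] :
    (ℓ : ℝ)⁻¹ ≤ ‖(p : ℚ_[ℓ])‖ ∧ ‖(p : ℚ_[ℓ])‖ ≤ 1 := by
  constructor
  · by_cases h : p = ℓ
    · subst h; rw [Padic.norm_p]
    · have : ‖(p : ℚ_[ℓ])‖ = 1 := by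
        rw [Padic.norm_natCast_eq_one_iff]
        exact (Nat.coprime_primes hℓ.out hp.out).2 (fun e => h e.symm)
      rw [this]
      apply inv_le_one_of_one_le₀
      exact_mod_cast hℓ.out.one_le
  · exact_mod_cast Padic.norm_int_le_one (p := ℓ) (p : ℤ)

lemma ex_int {ℓ : ℕ} [Fact ℓ.Prime] (x : ℚ_[ℓ]) (h : ‖x‖ ≤ 1) : ∃ y : ℤ_[ℓ], (y : ℚ_[ℓ]) = x :=
  ⟨⟨x, h⟩, rfl⟩

lemma cst_fin (p ℓ : ℕ) [hp : Fact p.Prime] [hℓ : Fact ℓ.Prime] :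
    FinQ (nsmulAddMonoidHom p : ℤ_[ℓ] →+ ℤ_[ℓ]) ∧
      Nat.card (AddMonoidHom.ker (nsmulAddMonoidHom p : ℤ_[ℓ] →+ ℤ_[ℓ])) = 1 := by
  have hk : Nat.card (AddMonoidHom.ker (nsmulAddMonoidHom p : ℤ_[ℓ] →+ ℤ_[ℓ])) = 1 := by
    apply ker_bot_of_inj
    intro u v h
    have h1 : p • u = p • v := h
    rw [nsmul_eq_mul, nsmul_eq_mul] at h1
    exact mul_left_cancel₀ (by exact_mod_cast hp.out.ne_zero) h1
  refine ⟨⟨?_, by rw [hk]; exact one_ne_zero⟩, hk⟩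
  have hopen : IsOpen ((AddMonoidHom.range (nsmulAddMonoidHom p : ℤ_[ℓ] →+ ℤ_[ℓ])) : Set ℤ_[ℓ]) := by
    apply AddSubgroup.isOpen_of_mem_nhds (g := 0)
    rw [Metric.mem_nhds_iff]
    have hpn : 0 < ‖(p : ℤ_[ℓ])‖ := norm_pos_iff.2 (by exact_mod_cast hp.out.ne_zero)
    refine ⟨‖(p : ℤ_[ℓ])‖, hpn, ?_⟩
    intro x hx
    rw [mem_ball_zero_iff] at hx
    have hp0 : (p : ℚ_[ℓ]) ≠ 0 := by exact_mod_cast hp.out.ne_zero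
    have hy : ‖(x : ℚ_[ℓ]) / (p : ℚ_[ℓ])‖ ≤ 1 := by
      rw [norm_div, div_le_one (norm_pos_iff.2 hp0)]
      have := hx.le
      rw [PadicInt.norm_def, PadicInt.norm_def] at this
      simpa using this
    obtain ⟨y, hy2⟩ := ex_int _ hy
    refine ⟨y, ?_⟩
    apply PadicInt.ext
    change ((p • y : ℤ_[ℓ]) : ℚ_[ℓ]) = x
    rw [nsmul_eq_mul, PadicInt.coe_mul, PadicInt.coe_natCast, hy2]
    exact mul_div_cancel₀ _ hp0
  have := AddSubgroup.quotient_finite_of_isOpen _ hopen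
  exact AddSubgroup.index_ne_zero_of_finite

lemma qf_pi (p ℓ d : ℕ) [hp : Fact p.Prime] [hℓ : Fact ℓ.Prime] :
    FinQ (nsmulAddMonoidHom p : (Fin d → ℤ_[ℓ]) →+ _) ∧
      qf (nsmulAddMonoidHom p : (Fin d → ℤ_[ℓ]) →+ _) = cst p ℓ ^ d := by
  obtain ⟨h1, h2⟩ := cst_fin p ℓ
  have hk : Nat.card (AddMonoidHom.ker (nsmulAddMonoidHom p : (Fin d → ℤ_[ℓ]) →+ _)) = 1 := by
    apply ker_bot_of_inj
    intro u v h
    have h1 : p • u = p • v := h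
    ext i : 1
    have h3 := congrFun h1 i
    simp only [Pi.smul_apply, nsmul_eq_mul] at h3
    exact mul_left_cancel₀ (by exact_mod_cast hp.out.ne_zero) h3
  have hr : AddMonoidHom.range (nsmulAddMonoidHom p : (Fin d → ℤ_[ℓ]) →+ _) =
      AddSubgroup.pi Set.univ (fun _ => AddMonoidHom.range (nsmulAddMonoidHom p : ℤ_[ℓ] →+ ℤ_[ℓ])) := by
    ext y
    rw [AddSubgroup.mem_pi]
    constructor
    · rintro ⟨x, rfl⟩ i _
      exact ⟨x i, rfl⟩
    · intro h
      choose x hx using fun i => h i (Set.mem_univ i)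
      exact ⟨x, funext hx⟩
  have hi : (AddMonoidHom.range (nsmulAddMonoidHom p : (Fin d → ℤ_[ℓ]) →+ _)).index =
      (AddMonoidHom.range (nsmulAddMonoidHom p : ℤ_[ℓ] →+ ℤ_[ℓ])).index ^ d := by
    rw [hr, AddSubgroup.index_pi]; simp
  refine ⟨⟨by rw [hi]; exact pow_ne_zero _ h1.1, by rw [hk]; exact one_ne_zero⟩, ?_⟩
  unfold cst qf
  rw [hk, hi, h2]; simp

/-- Passing to a subgroup with finite quotient. -/
lemma qf_finite_index {A D : Type*} [AddCommGroup A] [AddCommGroup D] (p : ℕ) (ι : D →+ A)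
    (hι : Function.Injective ι) (hfin : Finite (A ⧸ ι.range))
    (hD : FinQ (nsmulAddMonoidHom p : D →+ D)) :
    FinQ (nsmulAddMonoidHom p : A →+ A) ∧
      qf (nsmulAddMonoidHom p : A →+ A) = qf (nsmulAddMonoidHom p : D →+ D) := by
  obtain ⟨c1, c2⟩ := qf_finite (nsmulAddMonoidHom p : (A ⧸ ι.range) →+ _)
  have hex : (QuotientAddGroup.mk' ι.range).ker = ι.range := QuotientAddGroup.ker_mk' _
  have hsur : Function.Surjective (QuotientAddGroup.mk' ι.range) := QuotientAddGroup.mk'_surjective _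
  have a1 : ∀ x, (nsmulAddMonoidHom p : A →+ A) (ι x) = ι ((nsmulAddMonoidHom p : D →+ D) x) := by
    intro x; simp
  have a2 : ∀ x, (QuotientAddGroup.mk' ι.range) ((nsmulAddMonoidHom p : A →+ A) x) =
      (nsmulAddMonoidHom p : (A ⧸ ι.range) →+ _) (QuotientAddGroup.mk' ι.range x) := by
    intro x; simp
  have hA := (qf_exact ι (QuotientAddGroup.mk' ι.range) hι hsur hex _ _ _ a1 a2).2.2 hD c1
  refine ⟨hA, ?_⟩
  rw [qf_exact' ι (QuotientAddGroup.mk' ι.range) hι hsur hex _ _ _ a1 a2 hA hD c1, c2, mul_one]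

lemma qf_ballA (p ℓ : ℕ) [hp : Fact p.Prime] [hℓ : Fact ℓ.Prime] {F : Type*} [NormedField F]
    [IsUltrametricDist F] [NormedAlgebra ℚ_[ℓ] F] [FiniteDimensional ℚ_[ℓ] F] (r : ℝ) (hr : 0 < r) :
    FinQ (nsmulAddMonoidHom p : ballA F r hr.le →+ _) ∧
      qf (nsmulAddMonoidHom p : ballA F r hr.le →+ _) = cst p ℓ ^ (Module.finrank ℚ_[ℓ] F) := by
  have : ProperSpace F := FiniteDimensional.proper ℚ_[ℓ] F
  let b0 := Module.finBasis ℚ_[ℓ] F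
  set d := Module.finrank ℚ_[ℓ] F
  obtain ⟨s, hs0, hs⟩ : ∃ s : ℚ_[ℓ], s ≠ 0 ∧ ∀ i, ‖s • b0 i‖ ≤ r := by
    obtain ⟨M, hM⟩ := (Set.finite_range (fun i => ‖b0 i‖)).bddAbove
    obtain ⟨s, hs1, hs2⟩ := NormedField.exists_norm_lt ℚ_[ℓ] (r := r / (|M| + 1)) (by positivity)
    refine ⟨s, norm_pos_iff.1 hs1, fun i => ?_⟩
    rw [norm_smul]
    have h1 : ‖b0 i‖ ≤ |M| + 1 := by
      have : ‖b0 i‖ ≤ M := hM ⟨i, rfl⟩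
      linarith [le_abs_self M]
    calc ‖s‖ * ‖b0 i‖ ≤ (r / (|M| + 1)) * (|M| + 1) := by gcongr
      _ = r := by field_simp
  let g : F →+ F := nsmulAddMonoidHom 1
  let ι : (Fin d → ℤ_[ℓ]) →+ ballA F r hr.le :=
    AddMonoidHom.codRestrict
      { toFun := fun a => ∑ i, ((a i : ℚ_[ℓ]) * s) • b0 i
        map_zero' := by simp
        map_add' := by
          intro a b
          simp [add_mul, add_smul, Finset.sum_add_distrib] } _ (by
      intro a
      change ‖∑ i, ((a i : ℚ_[ℓ]) * s) • b0 i‖ ≤ r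
      refine IsUltrametricDist.norm_sum_le_of_forall_le_of_nonneg hr.le (fun i _ => ?_)
      rw [mul_smul, norm_smul]
      have h1 : ‖(a i : ℚ_[ℓ])‖ ≤ 1 := (a i).2
      have := hs i
      nlinarith [norm_nonneg (s • b0 i), norm_nonneg (a i : ℚ_[ℓ])])
  have hιv : ∀ a, ((ι a : ballA F r hr.le) : F) = ∑ i, ((a i : ℚ_[ℓ]) * s) • b0 i := fun a => rfl
  have hinj : Function.Injective ι := by
    rw [injective_iff_map_eq_zero]
    intro a ha
    have h1 : ∑ i, ((a i : ℚ_[ℓ]) * s) • b0 i = 0 := by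
      rw [← hιv, ha]; rfl
    have h2 := Fintype.linearIndependent_iff.1 b0.linearIndependent _ h1
    ext i
    have := (mul_eq_zero.1 (h2 i)).resolve_right hs0
    simpa using this
  have hcont : Continuous (fun x : F => b0.equivFun x) := LinearMap.continuous_of_finiteDimensional
    (b0.equivFun : F →ₗ[ℚ_[ℓ]] (Fin d → ℚ_[ℓ]))
  have hfinq : Finite (ballA F r hr.le ⧸ ι.range) := by
    have hs1 : 0 < ‖s‖ := norm_pos_iff.2 hs0
    have h0 := Metric.continuousAt_iff.1 (hcont.continuousAt (x := 0)) ‖s‖ hs1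
    obtain ⟨δ, hδ, hball⟩ := h0
    refine finite_quot_of_ball r hr.le _ δ hδ ?_
    intro x hx
    have h1 := hball (x := (x : F)) (by rwa [dist_zero_right])
    simp only [map_zero, dist_zero_right] at h1
    have h2 : ∀ i, ‖b0.equivFun (x : F) i / s‖ ≤ 1 := by
      intro i
      rw [norm_div, div_le_one hs1]
      exact (norm_le_pi_norm _ i).trans h1.le
    choose y hy using fun i => ex_int _ (h2 i)
    refine ⟨y, ?_⟩
    apply Subtype.ext
    rw [hιv]
    simp only [hy]
    have : ∀ i, (b0.equivFun (x : F) i / s * s) • b0 i = b0.equivFun (x : F) i • b0 i := by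
      intro i; rw [div_mul_cancel₀ _ hs0]
    simp only [this]
    exact b0.sum_equivFun (x : F)
  obtain ⟨q1, q2⟩ := qf_pi p ℓ d
  obtain ⟨q3, q4⟩ := qf_finite_index p ι hinj hfinq q1
  exact ⟨q3, q4.trans q2⟩

lemma qf_int (p : ℕ) [hp : Fact p.Prime] :
    FinQ (nsmulAddMonoidHom p : ℤ →+ ℤ) ∧ qf (nsmulAddMonoidHom p : ℤ →+ ℤ) = p := by
  have hk : Nat.card (AddMonoidHom.ker (nsmulAddMonoidHom p : ℤ →+ ℤ)) = 1 := by
    apply ker_bot_of_inj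
    intro u v h
    have h1 : p • u = p • v := h
    rw [nsmul_eq_mul, nsmul_eq_mul] at h1
    exact mul_left_cancel₀ (by exact_mod_cast hp.out.ne_zero) h1
  have hr : AddMonoidHom.range (nsmulAddMonoidHom p : ℤ →+ ℤ) = AddSubgroup.zmultiples (p : ℤ) := by
    ext y
    rw [Int.mem_zmultiples_iff]
    constructor
    · rintro ⟨x, rfl⟩; exact ⟨x, by simp⟩
    · rintro ⟨x, rfl⟩; exact ⟨x, by simp⟩
  have hi : (AddMonoidHom.range (nsmulAddMonoidHom p : ℤ →+ ℤ)).index = p := by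
    rw [hr, Int.index_zmultiples]; simp
  refine ⟨⟨by rw [hi]; exact hp.out.ne_zero, by rw [hk]; exact one_ne_zero⟩, ?_⟩
  unfold qf
  rw [hk, hi]; simp

theorem qf_units_normed (p ℓ : ℕ) [hp : Fact p.Prime] [hℓ : Fact ℓ.Prime] {F : Type*} [NormedField F]
    [IsUltrametricDist F] [NormedAlgebra ℚ_[ℓ] F] [FiniteDimensional ℚ_[ℓ] F] :
    FinQ (nsmulAddMonoidHom p : Additive Fˣ →+ _) ∧
      qf (nsmulAddMonoidHom p : Additive Fˣ →+ _) = p * cst p ℓ ^ (Module.finrank ℚ_[ℓ] F) := by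
  have : ProperSpace F := FiniteDimensional.proper ℚ_[ℓ] F
  have hnat : ∀ n : ℕ, ‖(n : F)‖ = ‖(n : ℚ_[ℓ])‖ := by
    intro n
    rw [← map_natCast (algebraMap ℚ_[ℓ] F) n, norm_algebraMap']
  have hl1 : ‖(ℓ : F)‖ = (ℓ : ℝ)⁻¹ := by rw [hnat, Padic.norm_p]
  have hl2 : (1 : ℝ) < ℓ := by exact_mod_cast hℓ.out.one_lt
  have hl0 : (0 : ℝ) < (ℓ : ℝ)⁻¹ := by positivity
  have hl3 : (ℓ : ℝ)⁻¹ < 1 := inv_lt_one_of_one_lt₀ hl2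
  obtain ⟨hpn1, hpn2⟩ := padic_norm_prime p ℓ
  rw [← hnat] at hpn1 hpn2
  set q : ℝ := (ℓ : ℝ)⁻¹ with hq
  have hr0 : 0 < q ^ 2 := by positivity
  have hr1 : q ^ 2 < 1 := by nlinarith
  have hrp : q ^ 2 < ‖(p : F)‖ := by nlinarith
  have hlne : (ℓ : F) ≠ 0 := norm_pos_iff.1 (by rw [hl1]; exact hl0)
  set V := ballU F (q ^ 2) hr0.le hr1 with hV
  obtain ⟨v1, v2, v3⟩ := ballU_compare hr0 hr1 hrp hpn2
  obtain ⟨w1, w2⟩ := qf_ballA p ℓ (F := F) (q ^ 2) hr0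
  have hVf : FinQ (nsmulAddMonoidHom p : Additive V →+ _) := by
    refine ⟨?_, ?_⟩
    · rw [v1]; exact w1.1
    · rw [v2]; exact one_ne_zero
  have hVq : qf (nsmulAddMonoidHom p : Additive V →+ _) = cst p ℓ ^ (Module.finrank ℚ_[ℓ] F) := by
    rw [← w2]
    unfold qf
    rw [v1, v2, v3]
  obtain ⟨z1, z2⟩ := qf_int p
  -- the product
  have hP : FinQ (nsmulAddMonoidHom p : (Additive V × ℤ) →+ _) ∧
      qf (nsmulAddMonoidHom p : (Additive V × ℤ) →+ _) = qf (nsmulAddMonoidHom p : Additive V →+ _) *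
        qf (nsmulAddMonoidHom p : ℤ →+ ℤ) := by
    have hi : Function.Injective (AddMonoidHom.inl (Additive V) ℤ) := by
      intro a b h; simpa using h
    have hs : Function.Surjective (AddMonoidHom.snd (Additive V) ℤ) := fun z => ⟨(0, z), rfl⟩
    have hex : (AddMonoidHom.snd (Additive V) ℤ).ker = (AddMonoidHom.inl (Additive V) ℤ).range := by
      ext ⟨a, b⟩
      constructor
      · intro h
        have hb : b = 0 := h
        subst hb
        exact ⟨a, rfl⟩
      · rintro ⟨x, hx⟩
        change b = 0
        exact (congrArg Prod.snd hx).symm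
    have a1 : ∀ x, (nsmulAddMonoidHom p : (Additive V × ℤ) →+ _) (AddMonoidHom.inl (Additive V) ℤ x) =
        AddMonoidHom.inl (Additive V) ℤ ((nsmulAddMonoidHom p : Additive V →+ _) x) := by
      intro x; simp
    have a2 : ∀ x, AddMonoidHom.snd (Additive V) ℤ ((nsmulAddMonoidHom p : (Additive V × ℤ) →+ _) x) =
        (nsmulAddMonoidHom p : ℤ →+ ℤ) (AddMonoidHom.snd (Additive V) ℤ x) := by
      intro x; simp
    have hf := (qf_exact _ _ hi hs hex _ _ _ a1 a2).2.2 hVf z1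
    exact ⟨hf, qf_exact' _ _ hi hs hex _ _ _ a1 a2 hf hVf z1⟩
  let ϖ : Fˣ := Units.mk0 (ℓ : F) hlne
  let ι : (Additive V × ℤ) →+ Additive Fˣ :=
    AddMonoidHom.coprod (MonoidHom.toAdditive V.subtype)
      ((zmultiplesHom (Additive Fˣ)) (Additive.ofMul ϖ))
  have hι : ∀ v z, (ι (v, z)).toMul = ((v.toMul : V) : Fˣ) * ϖ ^ z := by
    intro v z; rfl
  have hnϖ : ∀ z : ℤ, ‖((ϖ ^ z : Fˣ) : F)‖ = q ^ z := by
    intro z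
    rw [Units.val_zpow_eq_zpow_val, norm_zpow]
    simp only [ϖ, Units.val_mk0, hl1]
  have hinj : Function.Injective ι := by
    rw [injective_iff_map_eq_zero]
    rintro ⟨v, z⟩ h
    have h1 : ((v.toMul : V) : Fˣ) * ϖ ^ z = 1 := by rw [← hι, h]; rfl
    have h2 : ‖(((v.toMul : V) : Fˣ) : F)‖ = 1 := norm_eq_one_of_sub_le hr1 v.toMul.2
    have h3 : q ^ z = 1 := by
      have := congrArg (fun u : Fˣ => ‖(u : F)‖) h1
      simp only [Units.val_mul, norm_mul, h2, one_mul, Units.val_one, norm_one] at this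
      rw [← hnϖ, this]
    have h4 : z = 0 := by
      by_contra hz
      exact absurd h3 (by
        intro h3
        have := (zpow_right_strictAnti₀ hl0 hl3).injective (h3.trans (zpow_zero q).symm)
        exact hz this)
    subst h4
    rw [zpow_zero, mul_one] at h1
    have h5 : v.toMul = 1 := Subtype.ext h1
    rw [Prod.mk_eq_zero]
    exact ⟨h5, rfl⟩
  have hfin : Finite (Additive Fˣ ⧸ ι.range) := by
    have hc : IsCompact (Metric.closedBall (0 : F) 1) := isCompact_closedBall 0 1
    obtain ⟨t, hts, htf, hcov⟩ := hc.finite_cover_balls (e := q ^ 3) (by positivity)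
    have := htf.to_subtype
    let φ : t → (Additive Fˣ ⧸ ι.range) := fun x =>
      if h : (x : F) = 0 then 0 else QuotientAddGroup.mk (Additive.ofMul (Units.mk0 (x : F) h))
    apply Finite.of_surjective φ
    intro y
    obtain ⟨x, rfl⟩ := QuotientAddGroup.mk_surjective y
    obtain ⟨u, rfl⟩ := Additive.ofMul.surjective x
    obtain ⟨n, hn1, hn2⟩ := exists_mem_Ico_zpow (norm_pos_iff.2 u.ne_zero) hl2
    let w : Fˣ := u * ϖ ^ (n + 1)
    have hw : ‖(w : F)‖ = ‖(u : F)‖ * q ^ (n + 1) := by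
      simp only [w, Units.val_mul, norm_mul, hnϖ]
    have hqn : ∀ m : ℤ, q ^ m = ((ℓ : ℝ) ^ m)⁻¹ := by intro m; rw [hq, inv_zpow]
    have hlpos : (0 : ℝ) < ℓ := by linarith
    have hw1 : ‖(w : F)‖ ≤ 1 := by
      rw [hw, hqn, ← div_eq_mul_inv, div_le_one (by positivity)]
      exact hn2.le
    have hw2 : q ≤ ‖(w : F)‖ := by
      rw [hw, hqn, ← div_eq_mul_inv, le_div_iff₀ (by positivity), hq, zpow_add_one₀ hlpos.ne']
      rw [mul_comm ((ℓ : ℝ) ^ n), ← mul_assoc, inv_mul_cancel₀ hlpos.ne', one_mul]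
      exact hn1
    obtain ⟨z, hz, hxz⟩ := Set.mem_iUnion₂.1 (hcov (mem_closedBall_zero_iff.2 hw1))
    rw [mem_ball_iff_norm] at hxz
    have hq32 : q ^ 3 < q := by nlinarith
    have hz0 : z ≠ 0 := by
      rintro rfl
      rw [sub_zero] at hxz
      linarith
    refine ⟨⟨z, hz⟩, ?_⟩
    simp only [φ, hz0, dif_neg, not_false_eq_true]
    rw [QuotientAddGroup.eq]
    have hzw : ‖z / (w : F) - 1‖ ≤ q ^ 2 := by
      have e : z / (w : F) - 1 = -(((w : F) - z) / w) := by
        have := w.ne_zero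
        field_simp
        ring
      rw [e, norm_neg, norm_div, div_le_iff₀ (by linarith)]
      nlinarith
    let v : V := ⟨(Units.mk0 z hz0) * w⁻¹, by
      change ‖_‖ ≤ q ^ 2
      rw [Units.val_mul, Units.val_inv_eq_inv_val, ← div_eq_mul_inv]
      exact hzw⟩
    refine ⟨(Additive.ofMul v⁻¹, -(n + 1)), ?_⟩
    apply Additive.toMul.injective
    rw [hι]
    change ((Units.mk0 z hz0) * (u * ϖ ^ (n + 1))⁻¹)⁻¹ * ϖ ^ (-(n + 1)) = (Units.mk0 z hz0)⁻¹ * u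
    rw [zpow_neg, mul_inv, inv_inv, mul_assoc, mul_assoc, mul_inv_cancel, mul_one]
  obtain ⟨q3, q4⟩ := qf_finite_index p ι hinj hfin hP.1
  refine ⟨q3, ?_⟩
  rw [q4, hP.2, hVq, z2, mul_comm]

theorem qf_units (p ℓ : ℕ) [hp : Fact p.Prime] [hℓ : Fact ℓ.Prime] (F : Type*) [Field F]
    [Algebra ℚ_[ℓ] F] [FiniteDimensional ℚ_[ℓ] F] :
    FinQ (nsmulAddMonoidHom p : Additive Fˣ →+ _) ∧
      qf (nsmulAddMonoidHom p : Additive Fˣ →+ _) = p * cst p ℓ ^ (Module.finrank ℚ_[ℓ] F) := by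
  letI n1 : NormedField F := spectralNorm.normedField ℚ_[ℓ] F
  letI n2 : NormedAlgebra ℚ_[ℓ] F := spectralNorm.normedAlgebra ℚ_[ℓ] F
  haveI : IsUltrametricDist F :=
    IsUltrametricDist.isUltrametricDist_of_isNonarchimedean_norm isNonarchimedean_spectralNorm
  exact qf_units_normed p ℓ (F := F)

end LocDesc
namespace LocDesc

section AbstractSystem

open Finset

/-- The abstract data extracted from a `ℤ_p`-extension: a commutative group `M` with an
automorphism `γ`, subgroups `A n` of `M` and norm maps between them. -/
structure Sys (p : ℕ) {M : Type*} [CommGroup M] {A : ℕ → Type*} [∀ n, CommGroup (A n)]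
    (j : ∀ n, A n →* M) (Nm : ∀ n, A (n + 1) →* A n) (γ : MulAut M) : Prop where
  inj : ∀ n, Function.Injective (j n)
  fixed : ∀ n u, (γ ^ (p ^ n)) (j n u) = j n u
  desc : ∀ n m, n ≤ m → ∀ u : A m, (γ ^ (p ^ n)) (j m u) = j m u → ∃ v : A n, j n v = j m u
  incl : ∀ n (u : A n), ∃ v : A (n + 1), j (n + 1) v = j n u
  stab : ∀ n (u : A n), ∃ v : A n, j n v = γ (j n u)
  norm : ∀ n x, j n (Nm n x) = ∏ i ∈ range p, (γ ^ (p ^ n * i)) (j (n + 1) x)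
  h90 : ∀ n k m, m = n + k → ∀ u : A m, ∏ i ∈ range (p ^ k), (γ ^ (p ^ n * i)) (j m u) = 1 →
    ∃ w : A m, j m u * j m w = (γ ^ (p ^ n)) (j m w)
  index : ∀ n, (Nm n).range.index = p
  fin : ∀ n i, Finite (A n ⧸ pModRange p (A n) i)

/-- Iterated norm. -/
def normTo {A : ℕ → Type*} [∀ n, CommGroup (A n)] (Nm : ∀ n, A (n + 1) →* A n) (n : ℕ) :
    ∀ k : ℕ, A (n + k) →* A n
  | 0 => MonoidHom.id _
  | (k + 1) => (normTo Nm n k).comp (Nm (n + k))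

lemma prod_range_mul_aux {M : Type*} [CommMonoid M] (f : ℕ → M) (a b : ℕ) :
    ∏ r ∈ range (a * b), f r = ∏ l ∈ range b, ∏ i ∈ range a, f (i + a * l) := by
  induction b with
  | zero => simp
  | succ b ih =>
    rw [Nat.mul_succ, Finset.prod_range_add, ih, Finset.prod_range_succ]
    congr 1
    exact Finset.prod_congr rfl fun i _ => by rw [add_comm]

variable {p : ℕ} [hp : Fact p.Prime] {M : Type*} [CommGroup M] {A : ℕ → Type*}
  [∀ n, CommGroup (A n)] {j : ∀ n, A n →* M} {Nm : ∀ n, A (n + 1) →* A n} {γ : MulAut M}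

lemma Sys.stab_pow (S : Sys p j Nm γ) (n : ℕ) (u : A n) (k : ℕ) :
    ∃ v : A n, j n v = (γ ^ k) (j n u) := by
  induction k with
  | zero => exact ⟨u, by simp⟩
  | succ k ih =>
    obtain ⟨v, hv⟩ := ih
    obtain ⟨w, hw⟩ := S.stab n v
    exact ⟨w, by rw [hw, hv, pow_succ', MulAut.mul_apply]⟩

lemma Sys.incl_le (S : Sys p j Nm γ) {n m : ℕ} (h : n ≤ m) (u : A n) :
    ∃ v : A m, j m v = j n u := by
  induction m, h using Nat.le_induction with
  | base => exact ⟨u, rfl⟩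
  | succ m _ ih =>
    obtain ⟨v, hv⟩ := ih
    obtain ⟨w, hw⟩ := S.incl m v
    exact ⟨w, hw.trans hv⟩

lemma Sys.fixed_mul (S : Sys p j Nm γ) (n : ℕ) (u : A n) (k : ℕ) :
    (γ ^ (p ^ n * k)) (j n u) = j n u := by
  induction k with
  | zero => simp
  | succ k ih => rw [Nat.mul_succ, pow_add, MulAut.mul_apply, S.fixed, ih]

lemma Sys.normTo_apply (S : Sys p j Nm γ) (n k : ℕ) (x : A (n + k)) :
    j n (normTo Nm n k x) = ∏ i ∈ range (p ^ k), (γ ^ (p ^ n * i)) (j (n + k) x) := by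
  induction k with
  | zero => simp [normTo]
  | succ k ih =>
    change j n (normTo Nm n k (Nm (n + k) x)) = _
    rw [ih, S.norm, pow_succ, prod_range_mul_aux, Finset.prod_comm]
    refine Finset.prod_congr rfl fun i _ => ?_
    rw [map_prod]
    refine Finset.prod_congr rfl fun l _ => ?_
    rw [← MulAut.mul_apply, ← pow_add]
    congr 2
    ring

lemma Sys.normTo_incl (S : Sys p j Nm γ) (n k : ℕ) (x : A (n + k)) (c : A n)
    (h : j (n + k) x = j n c) : normTo Nm n k x = c ^ (p ^ k) := by
  apply S.inj n
  rw [S.normTo_apply, h, map_pow]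
  rw [Finset.prod_congr rfl fun i _ => S.fixed_mul n c i]
  simp

lemma normTo_range_le (n k : ℕ) : (normTo Nm n (k + 1)).range ≤ (normTo Nm n k).range := by
  rintro _ ⟨y, rfl⟩
  exact ⟨Nm (n + k) y, rfl⟩

lemma Sys.pow_mem (S : Sys p j Nm γ) (n k : ℕ) (c : A n) :
    c ^ (p ^ k) ∈ (normTo Nm n k).range := by
  obtain ⟨v, hv⟩ := S.incl_le (Nat.le_add_right n k) c
  exact ⟨v, S.normTo_incl n k v c hv⟩

lemma Sys.inflation (S : Sys p j Nm γ) (n k : ℕ) (x : A n)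
    (hx : x ^ (p ^ k) ∈ (normTo Nm n (k + 1)).range) : x ∈ (Nm n).range := by
  obtain ⟨y, hy⟩ := hx
  have hyj := S.normTo_apply n (k + 1) y
  rw [hy] at hyj
  choose s hs using fun i => S.stab_pow (n + (k + 1)) y i
  obtain ⟨x', hx'⟩ := S.incl_le (show n ≤ n + (k + 1) by omega) x
  let z : A (n + (k + 1)) := ∏ i ∈ range p, s (p ^ n * i)
  have hz : j _ z = ∏ i ∈ range p, (γ ^ (p ^ n * i)) (j _ y) := by
    simp only [z, map_prod, hs]
  have h1 : ∏ i ∈ range (p ^ k), (γ ^ (p ^ (n + 1) * i)) (j _ (z / x')) = 1 := by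
    simp only [map_div, hz, hx', Finset.prod_div_distrib, map_prod]
    rw [div_eq_one]
    have e1 : ∀ i, (γ ^ (p ^ (n + 1) * i)) (j n x) = j n x := by
      intro i
      rw [pow_succ, mul_assoc, S.fixed_mul]
    simp only [e1, prod_const, card_range]
    rw [← map_pow, hyj, pow_succ' p k, prod_range_mul_aux]
    refine Finset.prod_congr rfl fun i _ => Finset.prod_congr rfl fun l _ => ?_
    rw [← MulAut.mul_apply, ← pow_add]
    congr 2
    ring
  obtain ⟨w, hw⟩ := S.h90 (n + 1) k (n + (k + 1)) (by ring) _ h1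
  choose t ht using fun i => S.stab_pow (n + (k + 1)) w i
  let u : A (n + (k + 1)) := y * w / t (p ^ n)
  have hu : j _ u = j _ y * j _ w / (γ ^ (p ^ n)) (j _ w) := by
    simp only [u, map_div, map_mul, ht]
  have h2 : ∏ i ∈ range p, (γ ^ (p ^ n * i)) (j _ u) = j n x := by
    have e1 : ∀ i, (γ ^ (p ^ n * i)) (j _ u) = (γ ^ (p ^ n * i)) (j _ y) *
        ((γ ^ (p ^ n * i)) (j _ w) / (γ ^ (p ^ n * (i + 1))) (j _ w)) := by
      intro i
      rw [hu, map_div, map_mul, Nat.mul_succ, pow_add, MulAut.mul_apply, mul_div_assoc]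
    simp only [e1, Finset.prod_mul_distrib]
    rw [← hz, Finset.prod_range_div' (fun i => (γ ^ (p ^ n * i)) (j _ w))]
    rw [← pow_succ, ← hw, map_div, hx']
    simp
  have h3 : (γ ^ (p ^ (n + 1))) (j _ u) = j _ u := by
    have e1 := Finset.prod_range_succ (fun i => (γ ^ (p ^ n * i)) (j _ u)) p
    have e2 := Finset.prod_range_succ' (fun i => (γ ^ (p ^ n * i)) (j _ u)) p
    have e3 : ∏ i ∈ range p, (γ ^ (p ^ n * (i + 1))) (j _ u) = j n x := by
      rw [← S.fixed n x, ← h2, map_prod]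
      refine Finset.prod_congr rfl fun l _ => ?_
      rw [← MulAut.mul_apply, ← pow_add]
      congr 2
      ring
    rw [e1, e3, h2] at e2
    simpa [← pow_succ] using e2
  obtain ⟨v, hv⟩ := S.desc (n + 1) _ (by omega) u h3
  refine ⟨v, S.inj n ?_⟩
  rw [S.norm, hv, h2]

lemma Sys.index_dvd (S : Sys p j Nm γ) (n k : ℕ) : (normTo Nm n k).range.index ∣ p ^ k := by
  induction k with
  | zero =>
    have : (normTo Nm n 0).range = ⊤ := MonoidHom.range_eq_top.2 Function.surjective_id
    rw [this]; simp
  | succ k ih =>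
    have : (normTo Nm n (k + 1)).range = (Nm (n + k)).range.map (normTo Nm n k) :=
      MonoidHom.range_comp _ _
    rw [this, Subgroup.index_map, pow_succ']
    refine Nat.mul_dvd_mul ?_ ih
    rw [← S.index (n + k)]
    exact Subgroup.index_dvd_of_le le_sup_left

lemma Sys.pow_mem_iff (S : Sys p j Nm γ) {n : ℕ} {x : A n} (hx : x ∉ (Nm n).range) (k : ℕ) :
    (∀ b : ℕ, x ^ b ∈ (normTo Nm n k).range ↔ p ^ k ∣ b) ∧
      ∀ y : A n, ∃ a : ℕ, y * (x ^ a)⁻¹ ∈ (normTo Nm n k).range := by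
  set R := (normTo Nm n k).range with hR
  have ho : orderOf (QuotientGroup.mk x : A n ⧸ R) = p ^ k := by
    rcases k with _ | k
    · have hR1 : R = ⊤ := MonoidHom.range_eq_top.2 Function.surjective_id
      rw [pow_zero, orderOf_eq_one_iff, QuotientGroup.eq_one_iff, hR1]
      trivial
    · apply orderOf_eq_prime_pow
      · rw [← QuotientGroup.mk_pow, QuotientGroup.eq_one_iff]
        exact fun h => hx (S.inflation n k x h)
      · rw [← QuotientGroup.mk_pow, QuotientGroup.eq_one_iff]
        exact S.pow_mem n _ x
  have hc : Nat.card (A n ⧸ R) ∣ p ^ k := S.index_dvd n k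
  have hpk : p ^ k ≠ 0 := pow_ne_zero _ hp.out.ne_zero
  have hc0 : Nat.card (A n ⧸ R) ≠ 0 := fun h => hpk (by rw [h] at hc; exact zero_dvd_iff.1 hc)
  have hc1 : Nat.card (A n ⧸ R) = p ^ k := by
    apply Nat.dvd_antisymm hc
    rw [← ho]
    exact orderOf_dvd_natCard _
  have hfin : Finite (A n ⧸ R) := Nat.finite_of_card_ne_zero hc0
  refine ⟨fun b => ?_, fun y => ?_⟩
  · rw [← QuotientGroup.eq_one_iff, QuotientGroup.mk_pow, ← orderOf_dvd_iff_pow_eq_one, ho]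
  · have htop : Subgroup.zpowers (QuotientGroup.mk x : A n ⧸ R) = ⊤ := by
      apply Subgroup.eq_top_of_card_eq
      rw [Nat.card_zpowers, ho, hc1]
    have hm : (QuotientGroup.mk y : A n ⧸ R) ∈ Subgroup.zpowers (QuotientGroup.mk x) := by
      rw [htop]; trivial
    rw [← mem_powers_iff_mem_zpowers] at hm
    obtain ⟨a, ha⟩ := hm
    refine ⟨a, ?_⟩
    rw [← QuotientGroup.eq_one_iff, QuotientGroup.mk_mul, QuotientGroup.mk_inv,
      QuotientGroup.mk_pow]
    rw [← ha]
    simp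

/-- Compatible families in the tower. -/
def IsLim (p : ℕ) {A : ℕ → Type*} [∀ n, CommGroup (A n)] (Nm : ∀ n, A (n + 1) →* A n)
    (g : ∀ n, pTower p (A n)) : Prop :=
  (∀ n, g n ∈ pCompletion p (A n)) ∧ ∀ n, pTowerMap p (Nm n) (g (n + 1)) = g n

lemma exists_family (Nm : ∀ n, A (n + 1) →* A n) (m0 : ℕ) (w : A m0) :
    ∃ W : ∀ m, A m, W m0 = w ∧ ∀ m < m0, Nm m (W (m + 1)) = W m := by
  induction m0 with
  | zero => exact ⟨Function.update (fun _ => 1) 0 w, by simp, by simp⟩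
  | succ m0 ih =>
    obtain ⟨W, h1, h2⟩ := ih (Nm m0 w)
    refine ⟨Function.update W (m0 + 1) w, by simp, ?_⟩
    intro m hm
    rw [Function.update_of_ne (by omega : m ≠ m0 + 1)]
    rcases Nat.lt_succ_iff_lt_or_eq.1 hm with h | rfl
    · rw [Function.update_of_ne (by omega : m + 1 ≠ m0 + 1)]
      exact h2 m h
    · rw [Function.update_self, h1]

lemma normTo_family {W : ∀ m, A m} (n k : ℕ) (h : ∀ m < n + k, Nm m (W (m + 1)) = W m) :
    normTo Nm n k (W (n + k)) = W n := by
  induction k with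
  | zero => rfl
  | succ k ih =>
    change normTo Nm n k (Nm (n + k) (W (n + k + 1))) = W n
    rw [h (n + k) (by omega)]
    exact ih fun m hm => h m (by omega)

lemma compactness (hfin : ∀ n i, Finite (A n ⧸ pModRange p (A n) i))
    (T : ∀ m i, Set (A m ⧸ pModRange p (A m) i))
    (H : ∀ k : ℕ, ∃ W : ∀ m, A m, (∀ m < k, Nm m (W (m + 1)) = W m) ∧
      ∀ m ≤ k, ∀ i ≤ k, (QuotientGroup.mk (W m) : A m ⧸ pModRange p (A m) i) ∈ T m i) :
    ∃ g, IsLim p Nm g ∧ ∀ m i, g m i ∈ T m i := by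
  choose W hW1 hW2 using H
  have hex : ∀ m i, ∃ c : A m ⧸ pModRange p (A m) i, ∀ᶠ k in (Filter.hyperfilter ℕ : Filter ℕ),
      (QuotientGroup.mk (W k m) : A m ⧸ pModRange p (A m) i) = c := by
    intro m i
    have := hfin m i
    rw [← Ultrafilter.eventually_exists_iff]
    exact Filter.Eventually.of_forall fun k => ⟨_, rfl⟩
  choose g hg using hex
  have hge : ∀ N, ∀ᶠ k in (Filter.hyperfilter ℕ : Filter ℕ), N ≤ k := fun N =>
    Nat.hyperfilter_le_atTop (Filter.eventually_ge_atTop N)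
  refine ⟨g, ⟨fun n i => ?_, fun n => ?_⟩, fun m i => ?_⟩
  · obtain ⟨k, h1, h2⟩ := ((hg n (i + 1)).and (hg n i)).exists
    rw [← h1, ← h2]
    rfl
  · funext i
    obtain ⟨k, ⟨h1, h2⟩, h3⟩ := (((hg (n + 1) i).and (hg n i)).and (hge (n + 1))).exists
    change QuotientGroup.map _ _ (Nm n) (pModRange_le_comap (Nm n) i) (g (n + 1) i) = g n i
    rw [← h1, ← h2, QuotientGroup.map_mk, hW1 k n (by omega)]
  · obtain ⟨k, h1, h2⟩ := ((hg m i).and (hge (max m i))).exists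
    rw [← h1]
    exact hW2 k m (by omega) i (by omega)


lemma IsLim.proj {f : ∀ n, pTower p (A n)} (hf : IsLim p Nm f) (m i k : ℕ) (u : A m)
    (hu : (QuotientGroup.mk u : A m ⧸ pModRange p (A m) (i + k)) = f m (i + k)) :
    (QuotientGroup.mk u : A m ⧸ pModRange p (A m) i) = f m i := by
  induction k with
  | zero => exact hu
  | succ k ih =>
    apply ih
    rw [← hf.1 m (i + k)]
    change _ = QuotientGroup.map _ _ (MonoidHom.id (A m)) (pModRange_succ_le p (A m) (i + k))
      (f m (i + (k + 1)))
    rw [← hu]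
    rfl

lemma IsLim.down {f : ∀ n, pTower p (A n)} (hf : IsLim p Nm f) (m i : ℕ) (u : A (m + 1))
    (hu : (QuotientGroup.mk u : A (m + 1) ⧸ pModRange p (A (m + 1)) i) = f (m + 1) i) :
    (QuotientGroup.mk (Nm m u) : A m ⧸ pModRange p (A m) i) = f m i := by
  rw [← hf.2 m]
  change _ = QuotientGroup.map _ _ (Nm m) (pModRange_le_comap (Nm m) i) (f (m + 1) i)
  rw [← hu]
  rfl

lemma IsLim.normTo {f : ∀ n, pTower p (A n)} (hf : IsLim p Nm f) (n k i : ℕ) (u : A (n + k))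
    (hu : (QuotientGroup.mk u : A (n + k) ⧸ pModRange p (A (n + k)) i) = f (n + k) i) :
    (QuotientGroup.mk (normTo Nm n k u) : A n ⧸ pModRange p (A n) i) = f n i := by
  induction k with
  | zero => exact hu
  | succ k ih => exact ih (Nm (n + k) u) (hf.down (n + k) i u hu)

theorem Sys.kernel (S : Sys p j Nm γ) (n : ℕ) (t : ∀ m, A m →* A m)
    (ht : ∀ m u, j m (t m u) = (γ ^ (p ^ n)) (j m u)) (f : ∀ n, pTower p (A n))
    (hf : IsLim p Nm f) (hfn : f n = 1) :
    ∃ g, IsLim p Nm g ∧ ∀ m, f m * g m = pTowerMap p (t m) (g m) := by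
  have htN : ∀ m u, t m (Nm m u) = Nm m (t (m + 1) u) := by
    intro m u
    apply S.inj m
    rw [ht, S.norm, S.norm, map_prod, ht]
    refine Finset.prod_congr rfl fun i _ => ?_
    rw [← MulAut.mul_apply, ← MulAut.mul_apply, ← pow_add, ← pow_add, add_comm]
  have key := compactness (p := p) (Nm := Nm) S.fin (fun m i => {c | f m i * c =
    QuotientGroup.map _ _ (t m) (pModRange_le_comap (t m) i) c}) ?_
  · obtain ⟨g, hg, hg2⟩ := key
    exact ⟨g, hg, fun m => funext fun i => hg2 m i⟩
  intro k
  obtain ⟨e, he⟩ := QuotientGroup.mk_surjective (f (n + k) (k + k))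
  have h1 := hf.normTo n k (k + k) e he
  rw [hfn, Pi.one_apply, QuotientGroup.eq_one_iff] at h1
  obtain ⟨c, hc⟩ := h1
  rw [powMonoidHom_apply] at hc
  obtain ⟨c', hc'⟩ := S.incl_le (Nat.le_add_right n k) c
  have h2 : ∏ i ∈ range (p ^ k), (γ ^ (p ^ n * i)) (j (n + k) (e * (c' ^ (p ^ k))⁻¹)) = 1 := by
    rw [← S.normTo_apply, map_mul, map_inv, map_pow, S.normTo_incl n k c' c hc', ← hc, ← pow_mul,
      ← pow_add, mul_inv_cancel, map_one]
  obtain ⟨w, hw⟩ := S.h90 n k _ rfl _ h2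
  rw [← ht, ← map_mul] at hw
  have hw1 := S.inj _ hw
  obtain ⟨W, hW1, hW2⟩ := exists_family Nm (n + k) w
  have h3 : ∀ d, d ≤ n + k → ∀ m, m + d = n + k → ∀ i ≤ k,
      f m i * (QuotientGroup.mk (W m) : A m ⧸ pModRange p (A m) i) =
        QuotientGroup.mk (t m (W m)) := by
    intro d
    induction d with
    | zero =>
      intro _ m hm i hi
      obtain rfl : m = n + k := hm
      obtain ⟨r, rfl⟩ := Nat.exists_eq_add_of_le hi
      rw [hW1, ← hw1]
      rw [← hf.proj (n + (i + r)) i (r + (i + r)) e (by rw [← add_assoc i r (i + r)]; exact he)]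
      rw [← QuotientGroup.mk_mul, QuotientGroup.eq]
      refine ⟨(c' ^ (p ^ r))⁻¹, ?_⟩
      rw [powMonoidHom_apply, inv_pow, ← pow_mul, ← pow_add, add_comm r i]
      have : (e * w)⁻¹ * (e * (c' ^ p ^ (i + r))⁻¹ * w) = (c' ^ p ^ (i + r))⁻¹ := by
        rw [mul_right_comm, inv_mul_cancel_left]
      exact this.symm
    | succ d ih =>
      intro hd m hm i hi
      have := ih (by omega) (m + 1) (by omega) i hi
      have h4 := congrArg (QuotientGroup.map _ _ (Nm m) (pModRange_le_comap (Nm m) i)) this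
      rw [map_mul, QuotientGroup.map_mk, QuotientGroup.map_mk, ← htN, hW2 m (by omega)] at h4
      rw [← h4, ← hf.2 m]
      rfl
  refine ⟨W, fun m hm => hW2 m (by omega), fun m hm i hi => ?_⟩
  exact h3 (n + k - m) (by omega) m (by omega) i hi

theorem Sys.image (S : Sys p j Nm γ) (n : ℕ) (y : pTower p (A n)) (hy : y ∈ pCompletion p (A n)) :
    (∃ g, IsLim p Nm g ∧ g n = y) ↔
      ∀ k (u : A n), (QuotientGroup.mk u : A n ⧸ pModRange p (A n) k) = y k →
        u ∈ (normTo Nm n k).range := by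
  constructor
  · rintro ⟨g, hg, rfl⟩ k u hu
    obtain ⟨e, he⟩ := QuotientGroup.mk_surjective (g (n + k) k)
    have h1 := hg.normTo n k k e he
    rw [← hu, QuotientGroup.eq] at h1
    obtain ⟨c, hc⟩ := h1
    rw [powMonoidHom_apply] at hc
    have : u = normTo Nm n k e * c ^ p ^ k := by rw [hc, mul_inv_cancel_left]
    rw [this]
    exact mul_mem ⟨e, rfl⟩ (S.pow_mem n k c)
  · intro H
    have key := compactness (p := p) (Nm := Nm) S.fin
      (fun m i => {c | ∀ h : n = m, c = (h ▸ y : pTower p (A m)) i}) ?_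
    · obtain ⟨g, hg, hg2⟩ := key
      exact ⟨g, hg, funext fun i => hg2 n i rfl⟩
    intro k
    obtain ⟨u, hu⟩ := QuotientGroup.mk_surjective (y k)
    obtain ⟨w, hw⟩ := H k u hu
    obtain ⟨W, hW1, hW2⟩ := exists_family Nm (n + k) w
    refine ⟨W, fun m hm => hW2 m (by omega), fun m hm i hi => ?_⟩
    rintro rfl
    have h1 := normTo_family n k hW2
    rw [hW1, hw] at h1
    rw [← h1]
    obtain ⟨r, rfl⟩ := Nat.exists_eq_add_of_le hi
    change _ = y i
    clear hw hm hW1 hW2 w W h1 hi H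
    induction r with
    | zero => exact hu
    | succ r ih =>
      apply ih
      rw [← hy (i + r)]
      change _ = QuotientGroup.map _ _ (MonoidHom.id (A n)) (pModRange_succ_le p (A n) (i + r))
        (y (i + (r + 1)))
      rw [← hu]
      rfl


lemma padic_exists (p : ℕ) [hp : Fact p.Prime] (a : ℕ → ℕ)
    (ha : ∀ k, (a (k + 1) : ZMod (p ^ k)) = a k) :
    ∃ z : ℤ_[p], ∀ k, PadicInt.toZModPow k z = (a k : ZMod (p ^ k)) := by
  have hker : ∀ k (z w : ℤ_[p]), z ≡ w [SMOD
      (IsLocalRing.maximalIdeal ℤ_[p] ^ k • ⊤ : Submodule ℤ_[p] ℤ_[p])] ↔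
        PadicInt.toZModPow k z = PadicInt.toZModPow k w := by
    intro k z w
    rw [SModEq.sub_mem, PadicInt.maximalIdeal_eq_span_p, Ideal.span_singleton_pow, smul_eq_mul,
      Ideal.mul_top, ← sub_eq_zero, ← map_sub, ← RingHom.mem_ker, PadicInt.ker_toZModPow]
  have hle : ∀ m n, m ≤ n → (a n : ZMod (p ^ m)) = a m := by
    intro m n h
    induction n, h using Nat.le_induction with
    | base => rfl
    | succ n hmn ih =>
      rw [← ih]
      have := ha n
      rw [ZMod.natCast_eq_natCast_iff] at this ⊢
      exact this.of_dvd (pow_dvd_pow p hmn)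
  obtain ⟨z, hz⟩ := IsPrecomplete.prec (I := IsLocalRing.maximalIdeal ℤ_[p]) (M := ℤ_[p])
    inferInstance (f := fun k => (a k : ℤ_[p])) (by
      intro m n h
      rw [hker, map_natCast, map_natCast, hle m n h])
  exact ⟨z, fun k => by rw [← (hker k _ _).1 (hz k), map_natCast]⟩

lemma padic_ext (p : ℕ) [hp : Fact p.Prime] (z w : ℤ_[p])
    (h : ∀ k, PadicInt.toZModPow k z = PadicInt.toZModPow k w) : z = w :=
  PadicInt.ext_of_toZModPow.1 h

/-- Relation defining the reciprocity map. -/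
def ArtRel (p : ℕ) [Fact p.Prime] {A : ℕ → Type*} [∀ n, CommGroup (A n)]
    (Nm : ∀ n, A (n + 1) →* A n) (n : ℕ) (x : A n) (y : pTower p (A n)) (a : ℤ_[p]) : Prop :=
  ∀ k (u : A n) (b : ℕ), (QuotientGroup.mk u : A n ⧸ pModRange p (A n) k) = y k →
    PadicInt.toZModPow k a = (b : ZMod (p ^ k)) → u * (x ^ b)⁻¹ ∈ (normTo Nm n k).range

lemma Sys.artRel_intro (S : Sys p j Nm γ) {n : ℕ} {x : A n} (hx : x ∉ (Nm n).range)
    (y : pTower p (A n)) (a : ℤ_[p])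
    (h : ∀ k, ∃ (u : A n) (b : ℕ), (QuotientGroup.mk u : A n ⧸ pModRange p (A n) k) = y k ∧
      PadicInt.toZModPow k a = (b : ZMod (p ^ k)) ∧ u * (x ^ b)⁻¹ ∈ (normTo Nm n k).range) :
    ArtRel p Nm n x y a := by
  intro k u' b' hu' hb'
  obtain ⟨u, b, hu, hb, hub⟩ := h k
  rw [← hu, QuotientGroup.eq] at hu'
  obtain ⟨c, hc⟩ := hu'
  rw [powMonoidHom_apply] at hc
  have hu2 : u' = u * (c ^ p ^ k)⁻¹ := by rw [hc, mul_inv, inv_inv, mul_comm u', mul_inv_cancel_left]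
  rw [hb] at hb'
  have hbb : (QuotientGroup.mk (x ^ b) : A n ⧸ (normTo Nm n k).range) =
      QuotientGroup.mk (x ^ b') := by
    have hxp : (QuotientGroup.mk x : A n ⧸ (normTo Nm n k).range) ^ (p ^ k) = 1 := by
      rw [← QuotientGroup.mk_pow, QuotientGroup.eq_one_iff]
      exact S.pow_mem n k x
    rw [ZMod.natCast_eq_natCast_iff] at hb'
    rw [QuotientGroup.mk_pow, QuotientGroup.mk_pow]
    apply pow_eq_pow_iff_modEq.2
    exact hb'.of_dvd (orderOf_dvd_of_pow_eq_one hxp)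
  have h1 : x ^ b * (x ^ b')⁻¹ ∈ (normTo Nm n k).range := by
    rw [← QuotientGroup.eq_one_iff, QuotientGroup.mk_mul, QuotientGroup.mk_inv, hbb,
      mul_inv_cancel]
  have : u' * (x ^ b')⁻¹ = (u * (x ^ b)⁻¹) * (c ^ p ^ k)⁻¹ * (x ^ b * (x ^ b')⁻¹) := by
    rw [hu2, mul_right_comm (u * (x ^ b)⁻¹), ← mul_assoc, inv_mul_cancel_right]
    rw [mul_right_comm]
  rw [this]
  exact mul_mem (mul_mem hub (inv_mem (S.pow_mem n k c))) h1

theorem Sys.artin (S : Sys p j Nm γ) (n : ℕ) :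
    ∃ φ : pCompletion p (A n) →* Multiplicative ℤ_[p], Function.Surjective φ ∧
      ∀ y, φ y = 1 ↔ ∃ g, IsLim p Nm g ∧ g n = y := by
  obtain ⟨x, hx⟩ : ∃ x, x ∉ (Nm n).range := by
    by_contra! h
    have : (Nm n).range = ⊤ := (Subgroup.eq_top_iff' _).2 h
    have h2 := S.index n
    rw [this, Subgroup.index_top] at h2
    exact hp.out.one_lt.ne h2
  have hnat : ∀ k (a : ℤ_[p]), ∃ b : ℕ, PadicInt.toZModPow k a = (b : ZMod (p ^ k)) := by
    intro k a
    haveI : NeZero (p ^ k) := ⟨pow_ne_zero _ hp.out.ne_zero⟩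
    exact ⟨(PadicInt.toZModPow k a).val, (ZMod.natCast_zmod_val _).symm⟩
  have hexist : ∀ y : pCompletion p (A n), ∃ a, ArtRel p Nm n x y a := by
    rintro ⟨y, hy⟩
    choose u hu using fun k => QuotientGroup.mk_surjective (y k)
    choose a ha using fun k => (S.pow_mem_iff hx k).2 (u k)
    obtain ⟨z, hz⟩ := padic_exists p a (by
      intro k
      have h1 : u k * (x ^ a (k + 1))⁻¹ ∈ (normTo Nm n k).range := by
        have h2 := hy k
        rw [← hu, ← hu, QuotientGroup.map_mk, QuotientGroup.eq] at h2
        obtain ⟨c, hc⟩ := h2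
        rw [powMonoidHom_apply, MonoidHom.id_apply] at hc
        have : u k = u (k + 1) * c ^ p ^ k := by rw [hc, mul_inv_cancel_left]
        rw [this, mul_right_comm]
        exact mul_mem (normTo_range_le n k (ha (k + 1))) (S.pow_mem n k c)
      have h2 := ha k
      have hxp : (QuotientGroup.mk (x ^ a (k + 1)) : A n ⧸ (normTo Nm n k).range) =
          QuotientGroup.mk (x ^ a k) := by
        rw [QuotientGroup.eq]
        have := mul_mem (inv_mem h2) h1
        have e : (u k * (x ^ a k)⁻¹)⁻¹ * (u k * (x ^ a (k + 1))⁻¹) =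
            (x ^ a (k + 1))⁻¹ * x ^ a k := by
          rw [mul_inv, inv_inv, mul_mul_mul_comm, inv_mul_cancel, one_mul, mul_comm]
        rwa [e] at this
      rw [ZMod.natCast_eq_natCast_iff]
      rw [QuotientGroup.mk_pow, QuotientGroup.mk_pow, pow_eq_pow_iff_modEq] at hxp
      refine hxp.of_dvd ?_
      rw [← (S.pow_mem_iff hx k).1, ← QuotientGroup.eq_one_iff, QuotientGroup.mk_pow,
        pow_orderOf_eq_one])
    exact ⟨z, S.artRel_intro hx _ _ fun k => ⟨u k, a k, hu k, hz k, ha k⟩⟩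
  have huniq : ∀ (y : pCompletion p (A n)) a a', ArtRel p Nm n x y a → ArtRel p Nm n x y a' →
      a = a' := by
    intro y a a' h h'
    apply padic_ext
    intro k
    obtain ⟨b, hb⟩ := hnat k a
    obtain ⟨b', hb'⟩ := hnat k a'
    obtain ⟨u, hu⟩ := QuotientGroup.mk_surjective ((y : pTower p (A n)) k)
    have h1 := h k u b hu hb
    have h2 := h' k u b' hu hb'
    have hxp : (QuotientGroup.mk (x ^ b) : A n ⧸ (normTo Nm n k).range) =
        QuotientGroup.mk (x ^ b') := by
      rw [QuotientGroup.eq]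
      have := mul_mem (inv_mem h2) h1
      have e : (u * (x ^ b')⁻¹)⁻¹ * (u * (x ^ b)⁻¹) = (x ^ b)⁻¹ * x ^ b' := by
        rw [mul_inv, inv_inv, mul_mul_mul_comm, inv_mul_cancel, one_mul, mul_comm]
      rwa [e] at this
    rw [hb, hb', ZMod.natCast_eq_natCast_iff]
    rw [QuotientGroup.mk_pow, QuotientGroup.mk_pow, pow_eq_pow_iff_modEq] at hxp
    refine hxp.of_dvd ?_
    rw [← (S.pow_mem_iff hx k).1, ← QuotientGroup.eq_one_iff, QuotientGroup.mk_pow,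
      pow_orderOf_eq_one]
  choose φ hφ using hexist
  have hmul : ∀ y y', φ (y * y') = φ y + φ y' := by
    intro y y'
    refine huniq _ _ _ (hφ _) (S.artRel_intro hx _ _ fun k => ?_)
    obtain ⟨b, hb⟩ := hnat k (φ y)
    obtain ⟨b', hb'⟩ := hnat k (φ y')
    obtain ⟨u, hu⟩ := QuotientGroup.mk_surjective ((y : pTower p (A n)) k)
    obtain ⟨u', hu'⟩ := QuotientGroup.mk_surjective ((y' : pTower p (A n)) k)
    refine ⟨u * u', b + b', ?_, ?_, ?_⟩
    · rw [QuotientGroup.mk_mul, hu, hu']; rfl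
    · rw [map_add, hb, hb', Nat.cast_add]
    · have := mul_mem (hφ y k u b hu hb) (hφ y' k u' b' hu' hb')
      rwa [mul_mul_mul_comm, ← mul_inv, ← pow_add] at this
  refine ⟨MonoidHom.mk' (fun y => Multiplicative.ofAdd (φ y)) fun y y' => by
    rw [hmul]; rfl, ?_, ?_⟩
  · intro a
    choose b hb using fun k => hnat k a.toAdd
    have hbb : ∀ k, b (k + 1) ≡ b k [MOD p ^ k] := by
      intro k
      rw [← ZMod.natCast_eq_natCast_iff, ← hb k]
      have h1 := PadicInt.zmod_cast_comp_toZModPow (p := p) k (k + 1) (Nat.le_succ k)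
      have h2 := congrArg (fun f => f a.toAdd) h1
      simp only [RingHom.comp_apply, hb (k + 1), map_natCast] at h2
      exact h2
    let y : pTower p (A n) := fun k => QuotientGroup.mk (x ^ b k)
    have hy : y ∈ pCompletion p (A n) := by
      intro k
      change (QuotientGroup.mk (x ^ b (k + 1)) : A n ⧸ pModRange p (A n) k) =
        QuotientGroup.mk (x ^ b k)
      rw [QuotientGroup.mk_pow, QuotientGroup.mk_pow, pow_eq_pow_iff_modEq]
      refine (hbb k).of_dvd (orderOf_dvd_of_pow_eq_one ?_)
      rw [← QuotientGroup.mk_pow, QuotientGroup.eq_one_iff]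
      exact ⟨x, rfl⟩
    refine ⟨⟨y, hy⟩, ?_⟩
    apply Multiplicative.toAdd.injective
    refine huniq _ _ _ (hφ ⟨y, hy⟩) (S.artRel_intro hx _ _ fun k =>
      ⟨x ^ b k, b k, rfl, hb k, ?_⟩)
    rw [mul_inv_cancel]
    exact one_mem _
  · intro y
    rw [S.image n y y.2]
    constructor
    · intro h k u hu
      have h0 : φ y = 0 := h
      have h1 := hφ y
      rw [h0] at h1
      have := h1 k u 0 hu (by simp)
      simpa using this
    · intro h
      have : φ y = 0 := huniq _ _ _ (hφ y) (S.artRel_intro hx _ _ fun k => by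
        obtain ⟨u, hu⟩ := QuotientGroup.mk_surjective ((y : pTower p (A n)) k)
        exact ⟨u, 0, hu, by simp, by simpa using h k u hu⟩)
      change Multiplicative.ofAdd (φ y) = 1
      rw [this]
      rfl

end AbstractSystem

end LocDesc
namespace LocDesc

section FieldPart

open Finset

lemma hilbert90 {L : Type*} [Field L] (σ : L ≃+* L) (N : ℕ) (hN : 0 < N) (hσ : ∀ x, (σ ^ N) x = x)
    (hinj : ∀ i < N, ∀ i' < N, (∀ x, (σ ^ i) x = (σ ^ i') x) → i = i') (u : L)
    (hu : ∏ i ∈ range N, (σ ^ i) u = 1) : ∃ w : L, w ≠ 0 ∧ u * w = σ w := by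
  let f : Fin N → (L →* L) := fun i => ((σ ^ (i : ℕ) : L ≃+* L) : L →* L)
  have hf : Function.Injective f := by
    intro i i' h
    apply Fin.ext
    exact hinj i i.2 i' i'.2 fun x => congrArg (fun g : L →* L => g x) h
  have hli := (linearIndependent_monoidHom L L).comp f hf
  rw [Fintype.linearIndependent_iff] at hli
  let b : ℕ → L := fun i => ∏ l ∈ range i, (σ ^ l) u
  have hb1 : ∀ i, u * σ (b i) = b (i + 1) := by
    intro i
    simp only [b, map_prod]
    rw [Finset.prod_range_succ', mul_comm]
    simp only [pow_succ', RingAut.mul_apply, pow_zero, RingAut.one_apply]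
  have hex : ∃ c, ∑ i ∈ range N, b i * (σ ^ i) c ≠ 0 := by
    by_contra! h
    have := hli (fun i => b i) (by
      funext c
      simp only [Function.comp_apply, Finset.sum_apply, Pi.smul_apply, smul_eq_mul, Pi.zero_apply]
      rw [← h c, ← Fin.sum_univ_eq_sum_range (fun i => b i * (σ ^ i) c)]
      rfl) ⟨0, hN⟩
    simp [b] at this
  obtain ⟨c, hc⟩ := hex
  set w := ∑ i ∈ range N, b i * (σ ^ i) c with hw
  have h1 : u * σ w = w := by
    rw [hw, map_sum, Finset.mul_sum]
    have e : ∀ i, u * σ (b i * (σ ^ i) c) = b (i + 1) * (σ ^ (i + 1)) c := by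
      intro i
      rw [map_mul, ← mul_assoc, hb1, pow_succ', RingAut.mul_apply]
    simp only [e]
    have e1 := Finset.sum_range_succ (fun i => b i * (σ ^ i) c) N
    have e2 := Finset.sum_range_succ' (fun i => b i * (σ ^ i) c) N
    rw [e1] at e2
    have e3 : b N = b 0 := by simp only [b, hu, range_zero, prod_empty]
    rw [e3, hσ] at e2
    simp only [pow_zero, RingAut.one_apply] at e2
    exact (add_right_cancel e2).symm
  have hw0 : σ w ≠ 0 := (map_ne_zero σ).2 hc
  refine ⟨w⁻¹, inv_ne_zero hc, ?_⟩
  rw [map_inv₀]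
  field_simp
  exact h1

lemma cyclic_norm {K L : Type*} [Field K] [Field L] [Algebra K L] [FiniteDimensional K L] (p : ℕ)
    [hp : Fact p.Prime] (σ : L ≃ₐ[K] L) (hσ : σ ^ p = 1) (hσ1 : σ ≠ 1)
    (hfix : ∀ x, σ x = x → ∃ y, algebraMap K L y = x) :
    Module.finrank K L = p ∧
      ∀ x, algebraMap K L (Algebra.norm K x) = ∏ i ∈ range p, (σ ^ i) x := by
  have ho : orderOf σ = p := orderOf_eq_prime hσ hσ1
  have hb : IntermediateField.fixedField (Subgroup.zpowers σ) = ⊥ := by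
    rw [eq_bot_iff]
    intro x hx
    rw [IntermediateField.mem_fixedField_iff] at hx
    obtain ⟨y, rfl⟩ := hfix x (hx σ (Subgroup.mem_zpowers σ))
    exact IntermediateField.algebraMap_mem _ y
  have hfr : Module.finrank K L = p := by
    have := IntermediateField.finrank_fixedField_eq_card (Subgroup.zpowers σ)
    rw [hb, IntermediateField.finrank_bot', Nat.card_zpowers, ho] at this
    exact this
  have hgal : IsGalois K L := by
    apply IsGalois.of_fixedField_eq_bot
    rw [eq_bot_iff, ← hb]
    exact IntermediateField.fixedField_antitone le_top
  refine ⟨hfr, fun x => ?_⟩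
  rw [Algebra.norm_eq_prod_automorphisms]
  have hc : Nat.card (L ≃ₐ[K] L) = p := by rw [IsGalois.card_aut_eq_finrank, hfr]
  symm
  apply Finset.prod_bij (fun i _ => σ ^ i)
  · intro i _; exact Finset.mem_univ _
  · intro i hi i' hi' h
    have := pow_injOn_Iio_orderOf (x := σ) (by rw [ho]; simpa using hi) (by rw [ho]; simpa using hi') h
    exact this
  · intro τ _
    have htop : Subgroup.zpowers σ = ⊤ := by
      apply Subgroup.eq_top_of_card_eq
      rw [Nat.card_zpowers, ho, hc]
    have hm : τ ∈ Subgroup.zpowers σ := by rw [htop]; trivial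
    rw [← mem_powers_iff_mem_zpowers, mem_powers_iff_mem_range_orderOf, ho] at hm
    obtain ⟨i, hi, rfl⟩ := Finset.mem_image.1 hm
    exact ⟨i, hi, rfl⟩
  · intro i _; rfl

theorem index_field (p ℓ : ℕ) [hp : Fact p.Prime] [hℓ : Fact ℓ.Prime] {K L : Type*} [Field K]
    [Field L] [Algebra K L] [Algebra ℚ_[ℓ] K] [Algebra ℚ_[ℓ] L] [IsScalarTower ℚ_[ℓ] K L]
    [FiniteDimensional ℚ_[ℓ] K] [FiniteDimensional K L] (σ : L ≃ₐ[K] L) (hσ : σ ^ p = 1)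
    (hσ1 : σ ≠ 1) (hfix : ∀ x, σ x = x → ∃ y, algebraMap K L y = x) (Nm : Lˣ →* Kˣ)
    (hNm : ∀ x : Lˣ, ((Nm x : Kˣ) : K) = Algebra.norm K (x : L)) : Nm.range.index = p := by
  obtain ⟨hfr, hnorm⟩ := cyclic_norm p σ hσ hσ1 hfix
  haveI : FiniteDimensional ℚ_[ℓ] L := FiniteDimensional.trans ℚ_[ℓ] K L
  have hdim : Module.finrank ℚ_[ℓ] L = Module.finrank ℚ_[ℓ] K * p := by
    rw [← hfr, Module.finrank_mul_finrank]
  obtain ⟨fK, qK⟩ := qf_units p ℓ K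
  obtain ⟨fL, qL⟩ := qf_units p ℓ L
  have hc : 0 < cst p ℓ := (cst_fin p ℓ).1.pos
  let s : AddMonoid.End (Additive Lˣ) := MonoidHom.toAdditive (Units.map (σ : L →* L))
  have hs : ∀ a : Additive Lˣ, (((s a).toMul : Lˣ) : L) = σ ((a.toMul : Lˣ) : L) := fun a => rfl
  have hsi : ∀ (i : ℕ) (a : Additive Lˣ), ((((s ^ i) a).toMul : Lˣ) : L) =
      (σ ^ i) ((a.toMul : Lˣ) : L) := by
    intro i
    induction i with
    | zero => intro a; rfl
    | succ i ih =>
      intro a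
      rw [pow_succ', pow_succ', AlgEquiv.mul_apply, ← ih, ← hs]
      rfl
  have hadd : ∀ a b : Additive Lˣ, (((a + b).toMul : Lˣ) : L) = (a.toMul : Lˣ) * (b.toMul : Lˣ) :=
    fun a b => rfl
  have hsum : ∀ (N : ℕ) (a : Additive Lˣ),
      ((((∑ i ∈ range N, s ^ i : AddMonoid.End (Additive Lˣ)) a).toMul : Lˣ) : L) =
      ∏ i ∈ range N, (σ ^ i) ((a.toMul : Lˣ) : L) := by
    intro N a
    induction N with
    | zero => rfl
    | succ N ih =>
      rw [Finset.sum_range_succ, Finset.prod_range_succ, ← ih, ← hsi]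
      rfl
  have hext : ∀ a b : Additive Lˣ, ((a.toMul : Lˣ) : L) = (b.toMul : Lˣ) → a = b :=
    fun a b h => Additive.toMul.injective (Units.ext h)
  have hsp : s ^ p = 1 := by
    ext1 a
    apply hext
    rw [hsi, hσ]
    rfl
  have ho : orderOf σ = p := orderOf_eq_prime hσ hσ1
  have hpw : ∀ (i : ℕ) (x : L), (((σ : L ≃+* L) ^ i : L ≃+* L)) x = (σ ^ i) x := by
    intro i
    induction i with
    | zero => intro x; rfl
    | succ i ih => intro x; rw [pow_succ', pow_succ', RingAut.mul_apply, ih]; rfl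
  have h90 : ∀ a, (∑ i ∈ range p, s ^ i : AddMonoid.End (Additive Lˣ)) a = 0 →
      ∃ b, a = b - s b := by
    intro a ha
    have h1 := hsum p a
    rw [ha] at h1
    obtain ⟨w, hw0, hw⟩ := hilbert90 (σ : L ≃+* L) p hp.out.pos
      (fun x => by rw [hpw, hσ]; rfl)
      (fun i hi i' hi' h => pow_injOn_Iio_orderOf (x := σ) (by rw [ho]; exact hi)
        (by rw [ho]; exact hi') (AlgEquiv.ext fun x => by rw [← hpw, ← hpw, h])) _
      (by simp only [hpw]; exact h1.symm)
    refine ⟨-Additive.ofMul (Units.mk0 w hw0), ?_⟩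
    rw [map_neg, sub_neg_eq_add, neg_add_eq_sub, eq_sub_iff_add_eq]
    apply hext
    exact hw
  let Φ : Additive Kˣ →+ Additive Lˣ := MonoidHom.toAdditive (Units.map (algebraMap K L : K →* L))
  have hΦi : Function.Injective Φ := by
    intro a b h
    apply Additive.toMul.injective
    apply Units.ext
    apply (algebraMap K L).injective
    exact congrArg (fun z : Additive Lˣ => ((z.toMul : Lˣ) : L)) h
  have hker : ∀ a, a ∈ AddMonoidHom.ker (1 - s : AddMonoid.End (Additive Lˣ)) ↔ s a = a := by
    intro a
    change a - s a = 0 ↔ _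
    rw [sub_eq_zero, eq_comm]
  have hΦr : Φ.range = AddMonoidHom.ker (1 - s : AddMonoid.End (Additive Lˣ)) := by
    ext a
    rw [hker]
    constructor
    · rintro ⟨b, rfl⟩
      apply hext
      exact σ.commutes _
    · intro h
      obtain ⟨y, hy⟩ := hfix ((a.toMul : Lˣ) : L)
        (congrArg (fun z : Additive Lˣ => ((z.toMul : Lˣ) : L)) h)
      have hy0 : y ≠ 0 := by
        rintro rfl
        rw [map_zero] at hy
        exact (a.toMul : Lˣ).ne_zero hy.symm
      exact ⟨Additive.ofMul (Units.mk0 y hy0), hext _ _ hy⟩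
  let ι : Additive Kˣ →+ AddMonoidHom.ker (1 - s : AddMonoid.End (Additive Lˣ)) :=
    Φ.codRestrict _ fun x => by rw [← hΦr]; exact ⟨x, rfl⟩
  have hι1 : Function.Injective ι := fun a b h => hΦi (congrArg Subtype.val h)
  have hι2 : ι.range = ⊤ := by
    rw [AddMonoidHom.range_eq_top]
    rintro ⟨a, ha⟩
    rw [← hΦr] at ha
    obtain ⟨b, rfl⟩ := ha
    exact ⟨b, rfl⟩
  have hfin : Finite (AddMonoidHom.ker (1 - s : AddMonoid.End (Additive Lˣ)) ⧸ ι.range) := by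
    rw [hι2]; infer_instance
  obtain ⟨fD, qD⟩ := qf_finite_index p ι hι1 hfin fK
  have key := norm_index p s hsp h90 (cst p ℓ ^ Module.finrank ℚ_[ℓ] K) (pow_pos hc _) fL
    (by rw [qL, hdim, pow_mul]) fD (by rw [qD, qK])
  have hmap : AddMonoidHom.range (∑ i ∈ range p, s ^ i : AddMonoid.End (Additive Lˣ)) =
      (MonoidHom.toAdditive Nm).range.map Φ := by
    rw [← AddMonoidHom.range_comp]
    have hcomp : (∑ i ∈ range p, s ^ i : AddMonoid.End (Additive Lˣ)) =
        Φ.comp (MonoidHom.toAdditive Nm) := by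
      refine AddMonoidHom.ext fun a => ?_
      apply hext
      refine (hsum p a).trans ?_
      rw [← hnorm, ← hNm]
      rfl
    rw [hcomp]
  rw [hmap, ← hΦr, AddMonoidHom.range_eq_map Φ,
    AddSubgroup.relIndex_map_map_of_injective _ _ hΦi, AddSubgroup.relIndex_top_right] at key
  exact key

lemma finite_pquot (p ℓ : ℕ) [hp : Fact p.Prime] [hℓ : Fact ℓ.Prime] {K : Type*} [Field K]
    [Algebra ℚ_[ℓ] K] [FiniteDimensional ℚ_[ℓ] K] (i : ℕ) :
    Finite (Kˣ ⧸ pModRange p Kˣ i) := by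
  have h : (pModRange p Kˣ i).index ≠ 0 := by
    induction i with
    | zero =>
      have : pModRange p Kˣ 0 = ⊤ := by
        rw [Subgroup.eq_top_iff']
        intro x
        exact ⟨x, by simp⟩
      rw [this]; simp
    | succ i ih =>
      have h1 : pModRange p Kˣ (i + 1) =
          (powMonoidHom p : Kˣ →* Kˣ).range.map (powMonoidHom (p ^ i)) := by
        rw [← MonoidHom.range_comp]
        unfold pModRange
        congr 1
        ext1 x
        simp [pow_succ', pow_mul]
      rw [h1, Subgroup.index_map]
      refine mul_ne_zero ?_ ih
      have h2 : (powMonoidHom p : Kˣ →* Kˣ).range.index ≠ 0 := (qf_units p ℓ K).1.1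
      intro h3
      have := Subgroup.index_dvd_of_le (le_sup_left : (powMonoidHom p : Kˣ →* Kˣ).range ≤
        (powMonoidHom p : Kˣ →* Kˣ).range ⊔ (powMonoidHom (p ^ i) : Kˣ →* Kˣ).ker)
      rw [h3, zero_dvd_iff] at this
      exact h2 this
  exact Nat.finite_of_card_ne_zero h

end FieldPart

end LocDesc
namespace LocDesc

lemma gal_comm {p : ℕ} [Fact p.Prime] {E Einf : Type*} [Field E] [Field Einf] [Algebra E Einf]
    (ρ : (Einf ≃ₐ[E] Einf) ≃* Multiplicative ℤ_[p]) (σ τ : Einf ≃ₐ[E] Einf) :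
    σ * τ = τ * σ := by
  apply ρ.injective
  rw [map_mul, map_mul, mul_comm]

/-- Restriction of an automorphism to a stable intermediate field, over a smaller one. -/
lemma exists_restr {E Einf : Type*} [Field E] [Field Einf] [Algebra E Einf]
    (K L : IntermediateField E Einf) [Algebra K L]
    (halg : ∀ y : K, ((algebraMap K L y : L) : Einf) = y)
    (γ : Einf ≃ₐ[E] Einf) (hst : ∀ x ∈ L, γ x ∈ L) (hst' : ∀ x ∈ L, γ⁻¹ x ∈ L)
    (hK : ∀ x ∈ K, γ x = x) : ∃ σ : L ≃ₐ[K] L, ∀ x : L, ((σ x : L) : Einf) = γ x := by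
  let f : L ≃+* L :=
    { toFun := fun x => ⟨γ x, hst _ x.2⟩
      invFun := fun x => ⟨γ⁻¹ x, hst' _ x.2⟩
      left_inv := fun x => Subtype.ext (by
        change (γ⁻¹ * γ) (x : Einf) = x
        rw [inv_mul_cancel]; rfl)
      right_inv := fun x => Subtype.ext (by
        change (γ * γ⁻¹) (x : Einf) = x
        rw [mul_inv_cancel]; rfl)
      map_add' := fun x y => Subtype.ext (map_add γ _ _)
      map_mul' := fun x y => Subtype.ext (map_mul γ _ _) }
  have hf : ∀ x : L, ((f x : L) : Einf) = γ x := fun x => rfl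
  refine ⟨AlgEquiv.ofRingEquiv (f := f) fun y => Subtype.ext ?_, fun x => ?_⟩
  · rw [hf, halg, hK _ y.2]
  · rw [AlgEquiv.ofRingEquiv_apply, hf]

/-- Everything about a single cyclic step, for abstract intermediate fields. -/
theorem step_gen (p ℓ : ℕ) [Fact p.Prime] [Fact ℓ.Prime]
    {E Einf : Type*} [Field E] [Field Einf] [Algebra E Einf]
    [Algebra ℚ_[ℓ] E] [FiniteDimensional ℚ_[ℓ] E]
    (K L : IntermediateField E Einf) [FiniteDimensional E K] [FiniteDimensional E L]
    [Algebra K L] (halg : ∀ y : K, ((algebraMap K L y : L) : Einf) = y)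
    (γ : Einf ≃ₐ[E] Einf) (hst : ∀ x ∈ L, γ x ∈ L) (hst' : ∀ x ∈ L, γ⁻¹ x ∈ L)
    (hK : ∀ x ∈ K, γ x = x) (hp : ∀ x ∈ L, (γ ^ p) x = x)
    (hne : ¬ ∀ x : L, γ x = x) (hdesc : ∀ x ∈ L, γ x = x → x ∈ K)
    (Nm : Lˣ →* Kˣ)
    (hN : ∀ x : Lˣ, ((Nm x : Kˣ) : K) = Algebra.norm K (x : L)) :
    Nm.range.index = p ∧ ∀ x : Lˣ, ((Nm x : K) : Einf) =
      ∏ i ∈ Finset.range p, (γ ^ i) ((x : L) : Einf) := by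
  haveI i2 : IsScalarTower E K L :=
    IsScalarTower.of_algebraMap_eq fun x => Subtype.ext (by rw [halg]; rfl)
  haveI : FiniteDimensional K L := FiniteDimensional.right E _ _
  letI i3 : Algebra ℚ_[ℓ] K := ((algebraMap E K).comp (algebraMap ℚ_[ℓ] E)).toAlgebra
  letI i4 : Algebra ℚ_[ℓ] L := ((algebraMap E L).comp (algebraMap ℚ_[ℓ] E)).toAlgebra
  haveI : IsScalarTower ℚ_[ℓ] E K := IsScalarTower.of_algebraMap_eq fun x => rfl
  haveI : FiniteDimensional ℚ_[ℓ] K := FiniteDimensional.trans ℚ_[ℓ] E _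
  haveI : IsScalarTower ℚ_[ℓ] K L := IsScalarTower.of_algebraMap_eq fun x =>
    Subtype.ext (by rw [halg]; rfl)
  obtain ⟨σ, hσc⟩ := exists_restr K L halg γ hst hst' hK
  have hσi : ∀ (i : ℕ) (x : L), (((σ ^ i) x : L) : Einf) = (γ ^ i) x := by
    intro i x
    induction i with
    | zero => rfl
    | succ i ih =>
      rw [pow_succ', AlgEquiv.mul_apply, hσc, ih, ← AlgEquiv.mul_apply, ← pow_succ']
  have hσp : σ ^ p = 1 := by
    refine AlgEquiv.ext fun x => Subtype.ext ?_
    rw [hσi, hp _ x.2, AlgEquiv.one_apply]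
  have hσ1 : σ ≠ 1 := by
    intro h
    apply hne
    intro x
    rw [← hσc, h, AlgEquiv.one_apply]
  have hfix : ∀ x, σ x = x → ∃ y, algebraMap K L y = x := by
    intro x hx
    have := hdesc x x.2 (by rw [← hσc, hx])
    exact ⟨⟨x, this⟩, Subtype.ext (halg _)⟩
  refine ⟨index_field p ℓ σ hσp hσ1 hfix Nm hN, fun x => ?_⟩
  rw [hN, ← halg, (cyclic_norm p σ hσp hσ1 hfix).2]
  have h2 := map_prod L.val (fun i => (σ ^ i) (x : L)) (Finset.range p)
  refine Eq.trans h2 (Finset.prod_congr rfl fun i _ => hσi i _)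

section Concrete

open Finset

variable {p : ℕ} [hp : Fact p.Prime] {E Einf : Type*} [Field E] [Field Einf] [Algebra E Einf]
  (ρ : (Einf ≃ₐ[E] Einf) ≃* Multiplicative ℤ_[p])

/-- Topological generator. -/
noncomputable def gen : Einf ≃ₐ[E] Einf := ρ.symm (Multiplicative.ofAdd 1)

lemma rho_gen_pow (k : ℕ) : ρ (gen ρ ^ k) = Multiplicative.ofAdd (k : ℤ_[p]) := by
  rw [map_pow, gen, MulEquiv.apply_symm_apply, ← ofAdd_nsmul, nsmul_eq_mul, mul_one]

lemma mem_gammaSub (n : ℕ) (σ : Einf ≃ₐ[E] Einf) :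
    σ ∈ gammaSub p ρ n ↔ ∃ a : ℤ_[p], (ρ σ).toAdd = p ^ n * a := by
  constructor
  · rintro ⟨a, ha⟩
    refine ⟨a.toAdd, ?_⟩
    have h1 : a ^ p ^ n = ρ σ := ha
    rw [← h1, toAdd_pow, nsmul_eq_mul, Nat.cast_pow]
  · rintro ⟨a, ha⟩
    refine ⟨Multiplicative.ofAdd a, ?_⟩
    change (Multiplicative.ofAdd a) ^ p ^ n = ρ σ
    apply Multiplicative.toAdd.injective
    rw [ha, toAdd_pow, nsmul_eq_mul, Nat.cast_pow]
    rfl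

lemma gen_pow_mem (n k : ℕ) : gen ρ ^ k ∈ gammaSub p ρ n ↔ p ^ n ∣ k := by
  rw [mem_gammaSub, rho_gen_pow, toAdd_ofAdd]
  have := PadicInt.pow_p_dvd_int_iff (p := p) n (k : ℤ)
  rw [Int.cast_natCast] at this
  rw [← Int.natCast_dvd_natCast, Nat.cast_pow, ← this]
  rfl

lemma gammaSub_decomp {n m : ℕ} (h : n ≤ m) (σ : Einf ≃ₐ[E] Einf) (hσ : σ ∈ gammaSub p ρ n) :
    ∃ (b : ℕ), ∃ τ ∈ gammaSub p ρ m, σ = gen ρ ^ (p ^ n * b) * τ := by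
  obtain ⟨a, ha⟩ := (mem_gammaSub ρ n σ).1 hσ
  obtain ⟨r, rfl⟩ := Nat.exists_eq_add_of_le h
  have h1 := PadicInt.appr_spec r a
  rw [Ideal.mem_span_singleton] at h1
  obtain ⟨c, hc⟩ := h1
  refine ⟨a.appr r, (gen ρ ^ (p ^ n * a.appr r))⁻¹ * σ, ?_, by group⟩
  rw [mem_gammaSub]
  refine ⟨c, ?_⟩
  rw [map_mul, map_inv, rho_gen_pow, toAdd_mul, toAdd_inv, ha, toAdd_ofAdd, Nat.cast_mul,
    Nat.cast_pow]
  linear_combination (p : ℤ_[p]) ^ n * hc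

lemma mem_zpLayer (n : ℕ) (x : Einf) :
    x ∈ zpLayer p ρ n ↔ ∀ σ ∈ gammaSub p ρ n, σ x = x := by
  unfold zpLayer
  rw [IntermediateField.mem_fixedField_iff]

lemma zpLayer_stab (n : ℕ) (σ : Einf ≃ₐ[E] Einf) {x : Einf} (hx : x ∈ zpLayer p ρ n) :
    σ x ∈ zpLayer p ρ n := by
  rw [mem_zpLayer] at hx ⊢
  intro τ hτ
  rw [← AlgEquiv.mul_apply, gal_comm ρ τ σ, AlgEquiv.mul_apply, hx τ hτ]

/-- Restriction of automorphisms to a layer. -/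
def res (n : ℕ) (σ : Einf ≃ₐ[E] Einf) : ↥(zpLayer p ρ n) ≃+* ↥(zpLayer p ρ n) where
  toFun x := ⟨σ x, zpLayer_stab ρ n σ x.2⟩
  invFun x := ⟨σ⁻¹ x, zpLayer_stab ρ n σ⁻¹ x.2⟩
  left_inv x := Subtype.ext (by
    change (σ⁻¹ * σ) (x : Einf) = x
    rw [inv_mul_cancel]; rfl)
  right_inv x := Subtype.ext (by
    change (σ * σ⁻¹) (x : Einf) = x
    rw [mul_inv_cancel]; rfl)
  map_add' x y := Subtype.ext (map_add σ _ _)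
  map_mul' x y := Subtype.ext (map_mul σ _ _)

lemma res_coe (n : ℕ) (σ : Einf ≃ₐ[E] Einf) (x : ↥(zpLayer p ρ n)) :
    ((res ρ n σ x : ↥(zpLayer p ρ n)) : Einf) = σ x := rfl

lemma res_pow_coe (n : ℕ) (σ : Einf ≃ₐ[E] Einf) (i : ℕ) (x : ↥(zpLayer p ρ n)) :
    (((res ρ n σ ^ i) x : ↥(zpLayer p ρ n)) : Einf) = (σ ^ i) x := by
  induction i with
  | zero => rfl
  | succ i ih => rw [pow_succ', pow_succ', RingAut.mul_apply, res_coe, ih]; rfl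

lemma gammaSub_closed [IsGalois E Einf] (n : ℕ) :
    IsClosed (gammaSub p ρ n : Set (Einf ≃ₐ[E] Einf)) := by
  have h : (gammaSub p ρ n : Set (Einf ≃ₐ[E] Einf)) = Set.range (fun σ => σ ^ (p ^ n)) := by
    ext σ
    constructor
    · rintro ⟨a, ha⟩
      refine ⟨ρ.symm a, ?_⟩
      apply ρ.injective
      change ρ (ρ.symm a ^ p ^ n) = ρ σ
      rw [map_pow, MulEquiv.apply_symm_apply]
      exact ha
    · rintro ⟨τ, rfl⟩
      exact ⟨ρ τ, (map_pow ρ τ (p ^ n)).symm⟩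
  rw [h]
  exact (isCompact_range (continuous_pow (p ^ n))).isClosed

lemma gammaSub_fixing [IsGalois E Einf] (n : ℕ) :
    (zpLayer p ρ n).fixingSubgroup = gammaSub p ρ n :=
  InfiniteGalois.fixingSubgroup_fixedField ⟨gammaSub p ρ n, gammaSub_closed ρ n⟩

lemma mem_gamma_of_fix [IsGalois E Einf] (n : ℕ) (σ : Einf ≃ₐ[E] Einf)
    (h : ∀ x : ↥(zpLayer p ρ n), σ x = x) : σ ∈ gammaSub p ρ n := by
  rw [← gammaSub_fixing, IntermediateField.mem_fixingSubgroup_iff]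
  exact fun x hx => h ⟨x, hx⟩

lemma layer_finite [IsGalois E Einf] (n : ℕ) : FiniteDimensional E ↥(zpLayer p ρ n) := by
  rw [← InfiniteGalois.isOpen_iff_finite, gammaSub_fixing]
  have hfi : (gammaSub p ρ n).FiniteIndex := by
    let f : (Einf ≃ₐ[E] Einf) →* Multiplicative (ZMod (p ^ n)) :=
      (AddMonoidHom.toMultiplicative (PadicInt.toZModPow (p := p) n).toAddMonoidHom).comp
        ρ.toMonoidHom
    haveI : NeZero (p ^ n) := ⟨pow_ne_zero _ hp.out.ne_zero⟩
    haveI : Finite (Multiplicative (ZMod (p ^ n))) := inferInstanceAs (Finite (ZMod (p ^ n)))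
    haveI : f.ker.FiniteIndex := Subgroup.finiteIndex_ker f
    refine Subgroup.finiteIndex_of_le (H := f.ker) ?_
    intro σ hσ
    have h1 : PadicInt.toZModPow n (ρ σ).toAdd = 0 := hσ
    rw [← RingHom.mem_ker, PadicInt.ker_toZModPow, Ideal.mem_span_singleton] at h1
    exact (mem_gammaSub ρ n σ).2 h1
  exact Subgroup.isOpen_of_isClosed_of_finiteIndex _ (gammaSub_closed ρ n)

lemma desc_mem {n m : ℕ} (h : n ≤ m) {x : Einf} (hx : x ∈ zpLayer p ρ m)
    (hfix : (gen ρ ^ p ^ n) x = x) : x ∈ zpLayer p ρ n := by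
  rw [mem_zpLayer] at hx ⊢
  intro σ hσ
  obtain ⟨b, τ, hτ, rfl⟩ := gammaSub_decomp ρ h σ hσ
  rw [AlgEquiv.mul_apply, hx τ hτ, pow_mul]
  clear hσ
  induction b with
  | zero => rfl
  | succ b ih => rw [pow_succ, AlgEquiv.mul_apply, hfix, ih]

/-- Everything about a single step of the tower. -/
theorem layer_step (ℓ : ℕ) [Fact ℓ.Prime] [Algebra ℚ_[ℓ] E] [FiniteDimensional ℚ_[ℓ] E]
    [IsGalois E Einf] (n : ℕ) (hle : zpLayer p ρ n ≤ zpLayer p ρ (n + 1))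
    (Nm : (↥(zpLayer p ρ (n + 1)))ˣ →* (↥(zpLayer p ρ n))ˣ)
    (hN : ∀ (x : (↥(zpLayer p ρ (n + 1)))ˣ),
      ((Nm x : ↥(zpLayer p ρ n)) : Einf) =
      ((@Algebra.norm (↥(zpLayer p ρ n)) (↥(zpLayer p ρ (n + 1))) _ _
          ((IntermediateField.inclusion hle).toRingHom.toAlgebra)
          (x : ↥(zpLayer p ρ (n + 1)))) : Einf)) :
    Nm.range.index = p ∧ ∀ x, ((Nm x : ↥(zpLayer p ρ n)) : Einf) =
      ∏ i ∈ range p, (gen ρ ^ (p ^ n * i)) ((x : ↥(zpLayer p ρ (n + 1))) : Einf) := by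
  haveI := layer_finite ρ n
  haveI := layer_finite ρ (n + 1)
  have h := @step_gen p ℓ _ _ E Einf _ _ _ _ _ (zpLayer p ρ n) (zpLayer p ρ (n + 1)) _ _
    ((IntermediateField.inclusion hle).toRingHom.toAlgebra)
    (fun y => IntermediateField.coe_inclusion hle y) (gen ρ ^ p ^ n)
    (fun x hx => zpLayer_stab ρ _ _ hx) (fun x hx => zpLayer_stab ρ _ _ hx)
    (fun x hx => (mem_zpLayer ρ n _).1 hx _ ((gen_pow_mem ρ n _).2 dvd_rfl))
    (fun x hx => by
      rw [← pow_mul, ← pow_succ]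
      exact (mem_zpLayer ρ (n + 1) _).1 hx _ ((gen_pow_mem ρ (n + 1) _).2 dvd_rfl))
    (fun hfx => by
      have h1 := mem_gamma_of_fix ρ (n + 1) _ hfx
      rw [gen_pow_mem] at h1
      have := (Nat.pow_dvd_pow_iff_le_right hp.out.one_lt).1 h1
      omega)
    (fun x hx hfx => desc_mem ρ (Nat.le_succ n) hx hfx)
    Nm (fun x => Subtype.ext (hN x))
  refine ⟨h.1, fun x => (h.2 x).trans ?_⟩
  refine Finset.prod_congr rfl fun i _ => ?_
  rw [← pow_mul]

lemma layer_fin (ℓ : ℕ) [Fact ℓ.Prime] [Algebra ℚ_[ℓ] E] [FiniteDimensional ℚ_[ℓ] E]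
    [IsGalois E Einf] (n i : ℕ) :
    Finite ((↥(zpLayer p ρ n))ˣ ⧸ pModRange p (↥(zpLayer p ρ n))ˣ i) := by
  haveI := layer_finite ρ n
  letI i3 : Algebra ℚ_[ℓ] ↥(zpLayer p ρ n) :=
    ((algebraMap E ↥(zpLayer p ρ n)).comp (algebraMap ℚ_[ℓ] E)).toAlgebra
  haveI : IsScalarTower ℚ_[ℓ] E ↥(zpLayer p ρ n) :=
    IsScalarTower.of_algebraMap_eq fun x => rfl
  haveI : FiniteDimensional ℚ_[ℓ] ↥(zpLayer p ρ n) := FiniteDimensional.trans ℚ_[ℓ] E _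
  exact finite_pquot p ℓ i

/-- Inclusion of units. -/
noncomputable def jU (n : ℕ) : (↥(zpLayer p ρ n))ˣ →* Einfˣ :=
  Units.map ((zpLayer p ρ n).val : ↥(zpLayer p ρ n) →* Einf)

/-- The generator acting on units. -/
noncomputable def gU : MulAut Einfˣ := Units.mapEquiv (gen ρ : Einf ≃* Einf)

lemma jU_coe (n : ℕ) (u : (↥(zpLayer p ρ n))ˣ) :
    ((jU ρ n u : Einfˣ) : Einf) = ((u : ↥(zpLayer p ρ n)) : Einf) := rfl

lemma gU_pow_coe (k : ℕ) (u : Einfˣ) : (((gU ρ ^ k) u : Einfˣ) : Einf) = (gen ρ ^ k) (u : Einf) := by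
  induction k with
  | zero => rfl
  | succ k ih => rw [pow_succ', pow_succ', AlgEquiv.mul_apply, ← ih]; rfl

lemma exists_jU (n : ℕ) (u : Einfˣ) (h : (u : Einf) ∈ zpLayer p ρ n) :
    ∃ v : (↥(zpLayer p ρ n))ˣ, jU ρ n v = u := by
  have h0 : (⟨(u : Einf), h⟩ : ↥(zpLayer p ρ n)) ≠ 0 := by
    intro h1
    exact u.ne_zero (congrArg Subtype.val h1)
  exact ⟨Units.mk0 _ h0, Units.ext rfl⟩

theorem sys_concrete (ℓ : ℕ) [Fact ℓ.Prime] [Algebra ℚ_[ℓ] E] [FiniteDimensional ℚ_[ℓ] E]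
    [IsGalois E Einf] (hle : ∀ n, zpLayer p ρ n ≤ zpLayer p ρ (n + 1))
    (Nm : ∀ n : ℕ, (↥(zpLayer p ρ (n + 1)))ˣ →* (↥(zpLayer p ρ n))ˣ)
    (hN : ∀ (n : ℕ) (x : (↥(zpLayer p ρ (n + 1)))ˣ),
      ((Nm n x : ↥(zpLayer p ρ n)) : Einf) =
      ((@Algebra.norm (↥(zpLayer p ρ n)) (↥(zpLayer p ρ (n + 1))) _ _
          ((IntermediateField.inclusion (hle n)).toRingHom.toAlgebra)
          (x : ↥(zpLayer p ρ (n + 1)))) : Einf)) :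
    Sys p (jU ρ) Nm (gU ρ) where
  inj n u v h := Units.ext (Subtype.ext (congrArg Units.val h))
  fixed n u := by
    apply Units.ext
    rw [gU_pow_coe]
    exact (mem_zpLayer ρ n _).1 (u : ↥(zpLayer p ρ n)).2 _ ((gen_pow_mem ρ n _).2 dvd_rfl)
  desc n m h u hu := by
    apply exists_jU
    refine desc_mem ρ h (u : ↥(zpLayer p ρ m)).2 ?_
    have := congrArg Units.val hu
    rwa [gU_pow_coe] at this
  incl n u := exists_jU ρ _ _ (hle n (u : ↥(zpLayer p ρ n)).2)
  stab n u := exists_jU ρ _ _ (zpLayer_stab ρ n (gen ρ) (u : ↥(zpLayer p ρ n)).2)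
  norm n x := by
    apply Units.ext
    rw [jU_coe, (layer_step ρ ℓ n (hle n) (Nm n) (hN n)).2, Units.coe_prod]
    refine Finset.prod_congr rfl fun i _ => ?_
    rw [gU_pow_coe]
    rfl
  h90 n k m h u hu := by
    subst h
    have e1 := congrArg Units.val hu
    rw [Units.coe_prod] at e1
    have hpow : ∀ i x, (((res ρ (n + k) (gen ρ ^ p ^ n)) ^ i) x : ↥(zpLayer p ρ (n + k))) =
        (gen ρ ^ (p ^ n * i)) (x : Einf) := by
      intro i x
      rw [res_pow_coe, ← pow_mul]
    obtain ⟨w, hw0, hw⟩ := hilbert90 (res ρ (n + k) (gen ρ ^ p ^ n)) (p ^ k)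
      (pow_pos hp.out.pos k) (fun x => by
        apply Subtype.ext
        rw [hpow, ← pow_add]
        exact (mem_zpLayer ρ _ _).1 x.2 _ ((gen_pow_mem ρ _ _).2 dvd_rfl)) (by
        have key : ∀ i i', i ≤ i' → i' < p ^ k →
            (∀ x, ((res ρ (n + k) (gen ρ ^ p ^ n)) ^ i) x =
              ((res ρ (n + k) (gen ρ ^ p ^ n)) ^ i') x) → i = i' := by
          intro i i' hii hi' hx
          obtain ⟨d, rfl⟩ := Nat.exists_eq_add_of_le hii
          have h1 : gen ρ ^ (p ^ n * d) ∈ gammaSub p ρ (n + k) := by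
            apply mem_gamma_of_fix
            intro x
            have h2 := hx x
            rw [pow_add, RingAut.mul_apply] at h2
            have h3 := (RingEquiv.injective _ h2)
            have h4 := congrArg Subtype.val h3
            rw [hpow] at h4
            exact h4.symm
          rw [gen_pow_mem, pow_add] at h1
          have h5 := Nat.dvd_of_mul_dvd_mul_left (pow_pos hp.out.pos n) h1
          have h6 : d = 0 := Nat.eq_zero_of_dvd_of_lt h5 (by omega)
          omega
        intro i hi i' hi' hx
        rcases le_total i i' with h | h
        · exact key i i' h hi' hx
        · exact (key i' i h hi fun x => (hx x).symm).symm) (u : ↥(zpLayer p ρ (n + k))) (by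
        apply Subtype.ext
        have := map_prod (zpLayer p ρ (n + k)).val
          (fun i => ((res ρ (n + k) (gen ρ ^ p ^ n)) ^ i) (u : ↥(zpLayer p ρ (n + k))))
          (range (p ^ k))
        refine this.trans ?_
        refine Eq.trans (Finset.prod_congr rfl fun i _ => ?_) e1
        rw [gU_pow_coe]
        exact hpow i _)
    refine ⟨Units.mk0 w hw0, Units.ext ?_⟩
    rw [gU_pow_coe]
    exact congrArg Subtype.val hw
  index n := (layer_step ρ ℓ n (hle n) (Nm n) (hN n)).1
  fin n i := layer_fin ρ ℓ n i

/-- `Γ_n` is isomorphic to `ℤ_p`. -/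
lemma gamma_iso (n : ℕ) : ∃ e : Multiplicative ℤ_[p] →* ↥(gammaSub p ρ n),
    Function.Bijective e := by
  let f : Multiplicative ℤ_[p] →* (Einf ≃ₐ[E] Einf) :=
    ρ.symm.toMonoidHom.comp (powMonoidHom (p ^ n))
  have hf : ∀ a, ρ (f a) = a ^ p ^ n := fun a => ρ.apply_symm_apply _
  refine ⟨f.codRestrict _ fun a => ⟨a, (hf a).symm⟩, ?_, ?_⟩
  · intro a b h
    have h1 : f a = f b := congrArg Subtype.val h
    have h2 : a ^ p ^ n = b ^ p ^ n := by rw [← hf, ← hf, h1]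
    have h3 := congrArg Multiplicative.toAdd h2
    rw [toAdd_pow, toAdd_pow, nsmul_eq_mul, nsmul_eq_mul] at h3
    apply Multiplicative.toAdd.injective
    refine mul_left_cancel₀ ?_ h3
    exact_mod_cast pow_ne_zero n hp.out.ne_zero
  · rintro ⟨σ, a, ha⟩
    refine ⟨a, Subtype.ext ?_⟩
    apply ρ.injective
    exact (hf a).trans ha

end Concrete

end LocDesc

/-- let `E/ℚ_ℓ` be a finite extension (`ℓ` any prime) and `E_∞/E` a
`ℤ_p`-extension with layers `E_n = E_∞^{Γ_n}` and `Γ_n = Gal(E_∞/E_n)`.  Let `L_n` be the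
`p`-completion of `E_nˣ` and `L_∞ = lim← L_n` the inverse limit along the norm maps
(`Nm`, pinned to the field norms by `hN`).  Then for each `n` there is an exact sequence
`0 → (L_∞)_{Γ_n} → L_n → Gal(E_∞/E_n) → 0`,
i.e. there is a surjection `Artin : L_n → Γ_n` whose kernel is exactly the image of
`L_∞`, while the kernel of `L_∞ → L_n` is the augmentation subgroup generated by the
elements `σ(g)·g⁻¹`, `σ ∈ Γ_n` (so that `L_n` contains `(L_∞)_{Γ_n}` as the kernel of the
Artin map). -/
theorem local_units_descent_exact_sequence (p ℓ : ℕ) [Fact p.Prime] [Fact ℓ.Prime]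
    (hodd : Odd p)
    (E : Type*) [Field E] [Algebra ℚ_[ℓ] E] [FiniteDimensional ℚ_[ℓ] E]
    (Einf : Type*) [Field Einf] [Algebra E Einf] [IsGalois E Einf] [Algebra.IsAlgebraic E Einf]
    (ρ : (Einf ≃ₐ[E] Einf) ≃* Multiplicative ℤ_[p])
    (hle : ∀ n, zpLayer p ρ n ≤ zpLayer p ρ (n + 1))
    (Nm : ∀ n : ℕ, (↥(zpLayer p ρ (n + 1)))ˣ →* (↥(zpLayer p ρ n))ˣ)
    (hN : ∀ (n : ℕ) (x : (↥(zpLayer p ρ (n + 1)))ˣ),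
      ((Nm n x : ↥(zpLayer p ρ n)) : Einf) =
      ((@Algebra.norm (↥(zpLayer p ρ n)) (↥(zpLayer p ρ (n + 1))) _ _
          ((IntermediateField.inclusion (hle n)).toRingHom.toAlgebra)
          (x : ↥(zpLayer p ρ (n + 1)))) : Einf))
    (act : (Einf ≃ₐ[E] Einf) → ∀ n : ℕ, (↥(zpLayer p ρ n))ˣ →* (↥(zpLayer p ρ n))ˣ)
    (hact : ∀ σ n (u : (↥(zpLayer p ρ n))ˣ),
      ((act σ n u : ↥(zpLayer p ρ n)) : Einf) = σ ((u : ↥(zpLayer p ρ n)) : Einf))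
    (actInf : (Einf ≃ₐ[E] Einf) → ↥(normLimit p ρ Nm) →* ↥(normLimit p ρ Nm))
    (hactInf : ∀ σ (g : ↥(normLimit p ρ Nm)) (n : ℕ),
      (actInf σ g : ∀ n, pTower p (↥(zpLayer p ρ n))ˣ) n =
        pTowerMap p (act σ n) ((g : ∀ n, pTower p (↥(zpLayer p ρ n))ˣ) n))
    (n : ℕ) :
    ∃ Artin : ↥(pCompletion p (↥(zpLayer p ρ n))ˣ) →* ↥(gammaSub p ρ n),
      Function.Surjective Artin ∧
      Artin.ker = (normLimitProj p ρ Nm n).range ∧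
      (normLimitProj p ρ Nm n).ker =
        Subgroup.closure {x | ∃ σ ∈ gammaSub p ρ n, ∃ g : ↥(normLimit p ρ Nm),
          x = actInf σ g * g⁻¹} := by
  have S := LocDesc.sys_concrete ρ ℓ hle Nm hN
  have hlim : ∀ g, g ∈ normLimit p ρ Nm ↔ LocDesc.IsLim p Nm g := fun g => Iff.rfl
  obtain ⟨φ, hφ1, hφ2⟩ := S.artin n
  obtain ⟨e, he⟩ := LocDesc.gamma_iso ρ n
  refine ⟨e.comp φ, he.2.comp hφ1, ?_, ?_⟩
  · ext y
    rw [MonoidHom.mem_ker, MonoidHom.comp_apply, ← map_one e, he.1.eq_iff, hφ2]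
    constructor
    · rintro ⟨g, hg, hgy⟩
      exact ⟨⟨g, hg⟩, Subtype.ext hgy⟩
    · rintro ⟨g, rfl⟩
      exact ⟨g, g.2, rfl⟩
  · apply le_antisymm
    · intro f hf
      have hf1 : (f : ∀ n, pTower p (↥(zpLayer p ρ n))ˣ) n = 1 := congrArg Subtype.val hf
      obtain ⟨g, hg, hfg⟩ := S.kernel n (fun m => act (LocDesc.gen ρ ^ p ^ n) m)
        (fun m u => Units.ext (by
          rw [LocDesc.gU_pow_coe, LocDesc.jU_coe, hact]
          rfl)) f f.2 hf1
      apply Subgroup.subset_closure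
      refine ⟨LocDesc.gen ρ ^ p ^ n, (LocDesc.gen_pow_mem ρ n _).2 dvd_rfl, ⟨g, hg⟩, ?_⟩
      rw [eq_mul_inv_iff_mul_eq]
      apply Subtype.ext
      funext m
      rw [hactInf]
      exact hfg m
    · rw [Subgroup.closure_le]
      rintro x ⟨σ, hσ, g, rfl⟩
      change _ = _
      rw [map_mul, map_inv, mul_inv_eq_one]
      apply Subtype.ext
      change (actInf σ g : ∀ n, pTower p (↥(zpLayer p ρ n))ˣ) n =
        (g : ∀ n, pTower p (↥(zpLayer p ρ n))ˣ) n
      rw [hactInf]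
      have hid : act σ n = MonoidHom.id _ := by
        ext u
        rw [hact]
        exact (LocDesc.mem_zpLayer ρ n _).1 (u : ↥(zpLayer p ρ n)).2 σ hσ
      rw [hid]
      funext i
      obtain ⟨u, hu⟩ := QuotientGroup.mk_surjective
        ((g : ∀ n, pTower p (↥(zpLayer p ρ n))ˣ) n i)
      change QuotientGroup.map _ _ (MonoidHom.id _) (pModRange_le_comap _ i)
        ((g : ∀ n, pTower p (↥(zpLayer p ρ n))ˣ) n i) = _
      rw [← hu]
      rfl
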